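/- For all convex bodies K, L in R^m (m ≥ 2), the Kneser–Süss inequality holds: Vol(K # L)^{(m−1)/m} ≥ Vol(K)^{(m−1)/m} + Vol(L)^{(m−1)/m}, with equality if and only if K and L are homothetic. -/

import Mathlib

open MeasureTheory Set
open scoped ENNReal Pointwise RealInnerProductSpace Topology

noncomputable section

abbrev Euc (m : ℕ) : Type := EuclideanSpace ℝ (Fin m)

/-- A convex body: compact convex set with nonempty interior. -/
def IsConvexBody {m : ℕ} (K : Set (Euc m)) : Prop :=
  Convex ℝ K ∧ IsCompact K ∧ (interior K).Nonempty

/-- A (compact convex) polytope: convex hull of a finite set. -/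
def IsPolytope {m : ℕ} (P : Set (Euc m)) : Prop :=
  ∃ s : Finset (Euc m), P = convexHull ℝ (s : Set (Euc m))

def unitSphere (m : ℕ) : Set (Euc m) := Metric.sphere 0 1

/-- `n` is an outward unit normal to `K` at the boundary point `x`. -/
def IsOutwardNormalAt {m : ℕ} (K : Set (Euc m)) (x n : Euc m) : Prop :=
  x ∈ frontier K ∧ ‖n‖ = 1 ∧ ∀ y ∈ K, ⟪y - x, n⟫ ≤ 0

open Classical in
/-- The (set-valued choice of) Gauss map of `K`. -/
def gaussMap {m : ℕ} (K : Set (Euc m)) (x : Euc m) : Euc m :=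
  if h : ∃ n, IsOutwardNormalAt K x n then h.choose else 0

/-- The surface area measure of `K`: the pushforward under the Gauss map of the
`(m-1)`-dimensional Hausdorff measure on the boundary of `K`. -/
def surfMeasure {m : ℕ} (K : Set (Euc m)) : Measure (Euc m) :=
  Measure.map (gaussMap K) (μH[(m : ℝ) - 1].restrict (frontier K))

/-- The face of `P` in direction `n`. -/
def faceIn {m : ℕ} (P : Set (Euc m)) (n : Euc m) : Set (Euc m) :=
  {x ∈ P | ∀ y ∈ P, ⟪y, n⟫ ≤ ⟪x, n⟫}

/-- The `(m-1)`-dimensional volume of the face of `P` in direction `n`. -/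
def faceArea {m : ℕ} (P : Set (Euc m)) (n : Euc m) : ℝ≥0∞ :=
  μH[(m : ℝ) - 1] (faceIn P n)

/-- `n` is the outward unit normal to a facet ((m-1)-dimensional face) of `P`. -/
def IsFacetNormal {m : ℕ} (P : Set (Euc m)) (n : Euc m) : Prop :=
  ‖n‖ = 1 ∧ 0 < faceArea P n

/-- A positive continuous density of mass `V` on an interval has a differentiable quantile
function. -/
lemma exists_quantile {f : ℝ → ℝ} {a b V : ℝ} (hab : a < b) (hf : ContinuousOn f (Ioo a b))
    (hpos : ∀ t ∈ Ioo a b, 0 < f t) (hf_int : IntegrableOn f (Ioo a b))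
    (hV : ∫ t in Ioo a b, f t = V) :
    ∃ z : ℝ → ℝ, StrictMonoOn z (Ioo 0 1) ∧ z '' Ioo 0 1 = Ioo a b ∧
      ∀ τ ∈ Ioo (0 : ℝ) 1, HasDerivAt z (V / f (z τ)) τ := by
  have hII : IntervalIntegrable f volume a b := by
    rw [intervalIntegrable_iff_integrableOn_Ioo_of_le hab.le]; exact hf_int
  set F : ℝ → ℝ := fun t => ∫ x in a..t, f x with hF
  have hFc : ContinuousOn F (Icc a b) := by
    have := intervalIntegral.continuousOn_primitive_interval (f := f) (μ := volume) (a := a)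
      (b := b)
      (by rw [uIcc_of_le hab.le, integrableOn_Icc_iff_integrableOn_Ioo]; exact hf_int)
    rwa [uIcc_of_le hab.le] at this
  have hFd : ∀ t ∈ Ioo a b, HasDerivAt F (f t) t := by
    intro t ht
    have hn : Ioo a b ∈ 𝓝 t := Ioo_mem_nhds ht.1 ht.2
    refine intervalIntegral.integral_hasDerivAt_right ?_ ?_ (hf.continuousAt hn)
    · exact hII.mono_set (by
        rw [uIcc_of_le ht.1.le, uIcc_of_le hab.le]; exact Icc_subset_Icc_right ht.2.le)
    · exact hf.stronglyMeasurableAtFilter isOpen_Ioo t ht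
  have hFm : StrictMonoOn F (Icc a b) := by
    refine strictMonoOn_of_deriv_pos (convex_Icc a b) hFc fun t ht => ?_
    rw [interior_Icc] at ht
    rw [(hFd t ht).deriv]; exact hpos t ht
  have hFa : F a = 0 := intervalIntegral.integral_same
  have hFb : F b = V := by
    rw [← hV, hF]
    simp only
    rw [intervalIntegral.integral_of_le hab.le, integral_Ioc_eq_integral_Ioo]
  have hVpos : 0 < V := by
    rw [← hFa, ← hFb]
    exact hFm (left_mem_Icc.2 hab.le) (right_mem_Icc.2 hab.le) hab
  have hex : ∀ τ : ℝ, ∃ t, τ ∈ Ioo (0 : ℝ) 1 → t ∈ Ioo a b ∧ F t = τ * V := by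
    intro τ
    by_cases hτ : τ ∈ Ioo (0 : ℝ) 1
    · have : τ * V ∈ Ioo (F a) (F b) := by
        rw [hFa, hFb]; exact ⟨mul_pos hτ.1 hVpos, by nlinarith [hτ.2]⟩
      obtain ⟨t, ht, h⟩ := intermediate_value_Ioo hab.le hFc this
      exact ⟨t, fun _ => ⟨ht, h⟩⟩
    · exact ⟨0, fun h => absurd h hτ⟩
  choose z hz using hex
  have hmono : StrictMonoOn z (Ioo 0 1) := by
    intro s hs t ht hst
    rw [← hFm.lt_iff_lt (Ioo_subset_Icc_self (hz s hs).1) (Ioo_subset_Icc_self (hz t ht).1),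
      (hz s hs).2, (hz t ht).2]
    exact mul_lt_mul_of_pos_right hst hVpos
  have himg : z '' Ioo 0 1 = Ioo a b := by
    apply Subset.antisymm
    · rintro _ ⟨τ, hτ, rfl⟩; exact (hz τ hτ).1
    · intro t ht
      have ht' := Ioo_subset_Icc_self ht
      have h0 : 0 < F t := by rw [← hFa]; exact hFm (left_mem_Icc.2 hab.le) ht' ht.1
      have h1 : F t < V := by rw [← hFb]; exact hFm ht' (right_mem_Icc.2 hab.le) ht.2
      have hτ : F t / V ∈ Ioo (0 : ℝ) 1 := ⟨div_pos h0 hVpos, (div_lt_one hVpos).2 h1⟩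
      refine ⟨F t / V, hτ, hFm.injOn (Ioo_subset_Icc_self (hz _ hτ).1) ht' ?_⟩
      rw [(hz _ hτ).2, div_mul_cancel₀ _ hVpos.ne']
  refine ⟨z, hmono, himg, fun τ hτ => ?_⟩
  have hn : Ioo (0 : ℝ) 1 ∈ 𝓝 τ := Ioo_mem_nhds hτ.1 hτ.2
  have hzτ := (hz τ hτ).1
  have hc : ContinuousAt z τ := by
    refine continuousAt_of_monotoneOn_of_image_mem_nhds hmono.monotoneOn hn ?_
    rw [himg]; exact Ioo_mem_nhds hzτ.1 hzτ.2
  have hd := HasDerivAt.of_local_left_inverse (f := fun t => F t / V) (g := z) hc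
    ((hFd _ hzτ).div_const V) (div_pos (hpos _ hzτ) hVpos).ne'
    (by filter_upwards [hn] with y hy
        rw [(hz y hy).2, mul_div_cancel_right₀ _ hVpos.ne'])
  rwa [inv_div] at hd

/-- A nonempty bounded open convex set. -/
structure IsOpenBody {E : Type*} [NormedAddCommGroup E] [NormedSpace ℝ E] (A : Set E) : Prop where
  isOpen : IsOpen A
  convex : Convex ℝ A
  isBounded : Bornology.IsBounded A
  nonempty : A.Nonempty

/-- The slice of `A` at height `t` of the first coordinate. -/
def slice {n : ℕ} (A : Set (Fin (n + 1) → ℝ)) (t : ℝ) : Set (Fin n → ℝ) :=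
  {z | (Fin.cons t z : Fin (n + 1) → ℝ) ∈ A}

lemma IsOpenBody.measure_pos {n : ℕ} {A : Set (Fin n → ℝ)} (hA : IsOpenBody A) :
    0 < volume.real A :=
  ENNReal.toReal_pos (hA.isOpen.measure_pos volume hA.nonempty).ne' hA.isBounded.measure_lt_top.ne

lemma IsOpenBody.combo {E : Type*} [NormedAddCommGroup E] [NormedSpace ℝ E] {A B : Set E}
    (hA : IsOpenBody A) (hB : IsOpenBody B) {s : ℝ} (hs : 0 < s) (t : ℝ) :
    IsOpenBody (s • A + t • B) where
  isOpen := (hA.isOpen.smul₀ hs.ne').add_right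
  convex := (hA.convex.smul s).add (hB.convex.smul t)
  isBounded := (hA.isBounded.smul₀ s).add (hB.isBounded.smul₀ t)
  nonempty := hA.nonempty.smul_set.add hB.nonempty.smul_set

lemma continuous_cons {n : ℕ} (t : ℝ) :
    Continuous fun z : Fin n → ℝ => (Fin.cons t z : Fin (n + 1) → ℝ) := by
  refine continuous_pi fun i => ?_
  refine Fin.cases ?_ (fun j => ?_) i
  · simpa using continuous_const
  · simpa using continuous_apply j

lemma IsOpenBody.slice {n : ℕ} {A : Set (Fin (n + 1) → ℝ)} (hA : IsOpenBody A) {t : ℝ}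
    (ht : t ∈ (fun x : Fin (n + 1) → ℝ => x 0) '' A) : IsOpenBody (slice A t) where
  isOpen := hA.isOpen.preimage (continuous_cons t)
  convex := by
    intro x hx y hy s r hs hr hsr
    have := hA.convex hx hy hs hr hsr
    show (Fin.cons t (s • x + r • y) : Fin (n + 1) → ℝ) ∈ A
    convert this using 1
    ext i
    refine Fin.cases ?_ (fun j => ?_) i
    · simp [← add_mul, hsr]
    · simp
  isBounded := by
    obtain ⟨R, hR⟩ := hA.isBounded.exists_norm_le
    refine (isBounded_iff_forall_norm_le).2 ⟨R, fun z hz => ?_⟩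
    have h := hR _ hz
    have hR0 : 0 ≤ R := (norm_nonneg _).trans h
    refine (pi_norm_le_iff_of_nonneg hR0).2 fun i => ?_
    have := (pi_norm_le_iff_of_nonneg hR0).1 h i.succ
    simpa using this
  nonempty := by
    obtain ⟨x, hx, rfl⟩ := ht
    exact ⟨Fin.tail x, by simpa [_root_.slice, Fin.cons_self_tail] using hx⟩

lemma slice_nonempty_iff {n : ℕ} {A : Set (Fin (n + 1) → ℝ)} {t : ℝ} :
    (slice A t).Nonempty ↔ t ∈ (fun x : Fin (n + 1) → ℝ => x 0) '' A := by
  constructor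
  · rintro ⟨z, hz⟩; exact ⟨_, hz, by simp⟩
  · rintro ⟨x, hx, rfl⟩
    exact ⟨Fin.tail x, by simpa [_root_.slice, Fin.cons_self_tail] using hx⟩

lemma slice_combo_subset {n : ℕ} (A B : Set (Fin (n + 1) → ℝ)) (s t x y : ℝ) :
    s • slice A x + t • slice B y ⊆ slice (s • A + t • B) (s * x + t * y) := by
  rintro _ ⟨_, ⟨u, hu, rfl⟩, _, ⟨v, hv, rfl⟩, rfl⟩
  refine ⟨_, ⟨_, hu, rfl⟩, _, ⟨_, hv, rfl⟩, ?_⟩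
  ext i
  refine Fin.cases ?_ (fun j => ?_) i <;> simp

lemma measurePreserving_cons (n : ℕ) : MeasurePreserving
    (fun p : ℝ × (Fin n → ℝ) => (Fin.cons p.1 p.2 : Fin (n + 1) → ℝ)) := by
  have := (volume_preserving_piFinSuccAbove (fun _ : Fin (n + 1) => ℝ) 0).symm
  convert this using 1
  funext p
  exact (Fin.insertNth_zero' p.1 p.2).symm

lemma measurable_volume_slice {n : ℕ} {A : Set (Fin (n + 1) → ℝ)} (hA : MeasurableSet A) :
    Measurable fun t => volume (slice A t) :=
  measurable_measure_prodMk_left ((measurePreserving_cons n).measurable hA)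

/-- Cavalieri's principle over the first coordinate. -/
lemma volume_inter_fst {n : ℕ} {A : Set (Fin (n + 1) → ℝ)} (hA : MeasurableSet A)
    {T : Set ℝ} (hT : MeasurableSet T) :
    volume (A ∩ {x | x 0 ∈ T}) = ∫⁻ t in T, volume (slice A t) := by
  have hm : MeasurableSet (A ∩ {x : Fin (n + 1) → ℝ | x 0 ∈ T}) :=
    hA.inter (measurable_pi_apply 0 hT)
  rw [← (measurePreserving_cons n).measure_preimage hm.nullMeasurableSet, Measure.volume_eq_prod,
    Measure.prod_apply ((measurePreserving_cons n).measurable hm), ← lintegral_indicator hT]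
  congr 1
  ext t
  by_cases ht : t ∈ T
  · simp [ht, _root_.slice, preimage]
  · simp [ht, preimage]

lemma volume_eq_lintegral_slice {n : ℕ} {A : Set (Fin (n + 1) → ℝ)} (hA : MeasurableSet A) :
    volume A = ∫⁻ t, volume (slice A t) := by
  simpa using volume_inter_fst hA MeasurableSet.univ

/-- The multiplicative Brunn–Minkowski inequality for open convex bodies in dimension `n`. -/
def LogBrunnMinkowski (n : ℕ) : Prop :=
  ∀ ⦃A B : Set (Fin n → ℝ)⦄, IsOpenBody A → IsOpenBody B → ∀ ⦃s t : ℝ⦄, 0 < s → 0 < t →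
    s + t = 1 → volume.real A ^ s * volume.real B ^ t ≤ volume.real (s • A + t • B)

lemma IsOpenBody.exists_Ioo {n : ℕ} {A : Set (Fin (n + 1) → ℝ)} (hA : IsOpenBody A) :
    ∃ a b, a < b ∧ (fun x : Fin (n + 1) → ℝ => x 0) '' A = Ioo a b := by
  set J := (fun x : Fin (n + 1) → ℝ => x 0) '' A with hJ
  have hne : J.Nonempty := hA.nonempty.image _
  have hopen : IsOpen J := isOpenMap_eval 0 _ hA.isOpen
  have hconv : Convex ℝ J := 
    hA.convex.is_linear_image (LinearMap.proj (R := ℝ) (φ := fun _ : Fin (n + 1) => ℝ) 0).isLinear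
  have hbdd : Bornology.IsBounded J :=
    (LipschitzWith.eval (α := fun _ : Fin (n + 1) => ℝ) 0).isBounded_image hA.isBounded
  have hconn : IsConnected J := ⟨hne, hconv.isPreconnected⟩
  have hsub := hconn.Ioo_csInf_csSup_subset hbdd.bddBelow hbdd.bddAbove
  have hsup : J ⊆ Ioo (sInf J) (sSup J) := by
    rw [← interior_Icc]
    exact hopen.subset_interior_iff.2 fun x hx =>
      ⟨csInf_le hbdd.bddBelow hx, le_csSup hbdd.bddAbove hx⟩
  have heq := hsup.antisymm hsub
  refine ⟨sInf J, sSup J, ?_, heq⟩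
  obtain ⟨x, hx⟩ := hne
  exact (hsup hx).1.trans (hsup hx).2

lemma LogBrunnMinkowski.slice_le {n : ℕ} (h : LogBrunnMinkowski n)
    {A B : Set (Fin (n + 1) → ℝ)} (hA : IsOpenBody A) (hB : IsOpenBody B) {s t x y : ℝ}
    (hs : 0 < s) (ht : 0 < t) (hst : s + t = 1)
    (hx : x ∈ (fun x : Fin (n + 1) → ℝ => x 0) '' A)
    (hy : y ∈ (fun x : Fin (n + 1) → ℝ => x 0) '' B) :
    volume.real (slice A x) ^ s * volume.real (slice B y) ^ t ≤
      volume.real (slice (s • A + t • B) (s * x + t * y)) := by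
  refine (h (hA.slice hx) (hB.slice hy) hs ht hst).trans ?_
  have hsub := slice_combo_subset A B s t x y
  refine measureReal_mono hsub ?_
  have hne : (slice (s • A + t • B) (s * x + t * y)).Nonempty :=
    (((hA.slice hx).combo (hB.slice hy) hs t).nonempty).mono hsub
  exact ((hA.combo hB hs t).slice (slice_nonempty_iff.1 hne)).isBounded.measure_lt_top.ne

lemma LogBrunnMinkowski.continuousOn_slice {n : ℕ} (h : LogBrunnMinkowski n)
    {A : Set (Fin (n + 1) → ℝ)} (hA : IsOpenBody A) :
    ContinuousOn (fun t => volume.real (slice A t)) ((fun x : Fin (n + 1) → ℝ => x 0) '' A) := by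
  obtain ⟨a, b, hab, hJ⟩ := hA.exists_Ioo
  have hpos : ∀ t ∈ Ioo a b, 0 < volume.real (slice A t) := fun t ht =>
    (hA.slice (hJ ▸ ht)).measure_pos
  have hconc : ConcaveOn ℝ (Ioo a b) fun t => Real.log (volume.real (slice A t)) := by
    refine concaveOn_iff_forall_pos.2 ⟨convex_Ioo a b, fun x hx y hy s t hs ht hst => ?_⟩
    have key := h.slice_le hA hA hs ht hst (hJ ▸ hx) (hJ ▸ hy)
    have hsum : s • A + t • A = A := by rw [← hA.convex.add_smul hs.le ht.le, hst, one_smul]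
    rw [hsum] at key
    have hx' := hpos x hx
    have hy' := hpos y hy
    have := Real.log_le_log (by positivity) key
    rwa [Real.log_mul (by positivity) (by positivity), Real.log_rpow hx', Real.log_rpow hy'] at this
  rw [hJ]
  refine ((hconc.continuousOn isOpen_Ioo).rexp).congr fun t ht => ?_
  exact (Real.exp_log (hpos t ht)).symm

lemma LogBrunnMinkowski.exists_quantile {n : ℕ} (h : LogBrunnMinkowski n)
    {A : Set (Fin (n + 1) → ℝ)} (hA : IsOpenBody A) :
    ∃ z : ℝ → ℝ, StrictMonoOn z (Ioo 0 1) ∧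
      z '' Ioo 0 1 = (fun x : Fin (n + 1) → ℝ => x 0) '' A ∧
      ∀ τ ∈ Ioo (0 : ℝ) 1, HasDerivAt z (volume.real A / volume.real (slice A (z τ))) τ := by
  obtain ⟨a, b, hab, hJ⟩ := hA.exists_Ioo
  have hc := h.continuousOn_slice hA
  rw [hJ] at hc ⊢
  have hm := measurable_volume_slice hA.isOpen.measurableSet
  have hzero : ∀ t, t ∉ Ioo a b → volume (slice A t) = 0 := by
    intro t ht
    rw [← hJ, ← slice_nonempty_iff, not_nonempty_iff_eq_empty] at ht
    rw [ht, measure_empty]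
  have hvol : ∫⁻ t in Ioo a b, volume (slice A t) = volume A := by
    rw [volume_eq_lintegral_slice hA.isOpen.measurableSet]
    refine setLIntegral_eq_of_support_subset ?_
    intro t ht
    by_contra hcon
    exact ht (hzero t hcon)
  have hfin : ∫⁻ t in Ioo a b, volume (slice A t) ≠ ∞ := by
    rw [hvol]; exact hA.isBounded.measure_lt_top.ne
  refine _root_.exists_quantile hab hc (fun t ht => (hA.slice (hJ ▸ ht)).measure_pos)
    (integrable_toReal_of_lintegral_ne_top hm.aemeasurable hfin) ?_
  simp only [Measure.real]
  rw [integral_toReal hm.aemeasurable (ae_lt_top' hm.aemeasurable hfin), hvol]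

/-- The quantile function pushes the uniform distribution to the first marginal. -/
lemma map_fst_eq_map_quantile {n : ℕ} {A : Set (Fin (n + 1) → ℝ)} (hA : IsOpenBody A)
    {z : ℝ → ℝ} (hz : StrictMonoOn z (Ioo 0 1))
    (himg : z '' Ioo 0 1 = (fun x : Fin (n + 1) → ℝ => x 0) '' A)
    (hd : ∀ τ ∈ Ioo (0 : ℝ) 1, HasDerivAt z (volume.real A / volume.real (slice A (z τ))) τ) :
    (volume.restrict A).map (fun x : Fin (n + 1) → ℝ => x 0) =
      volume A • (volume.restrict (Ioo 0 1)).map z := by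
  have hzc : ContinuousOn z (Ioo 0 1) := fun τ hτ => (hd τ hτ).continuousAt.continuousWithinAt
  have hzm : AEMeasurable z (volume.restrict (Ioo (0 : ℝ) 1)) := hzc.aemeasurable measurableSet_Ioo
  ext T hT
  have hm0 : Measurable fun x : Fin (n + 1) → ℝ => x 0 := measurable_pi_apply 0
  rw [Measure.map_apply hm0 hT, Measure.restrict_apply (hm0 hT), Measure.smul_apply,
    Measure.map_apply_of_aemeasurable hzm hT, inter_comm]
  have h1 := volume_inter_fst hA.isOpen.measurableSet hT
  change volume (A ∩ {x : Fin (n + 1) → ℝ | x 0 ∈ T}) = _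
  rw [h1]
  have h2 : ∫⁻ t in T, volume (slice A t) =
      ∫⁻ t in z '' Ioo 0 1, T.indicator (fun t => volume (slice A t)) t := by
    rw [← lintegral_indicator hT]
    refine (setLIntegral_eq_of_support_subset ?_).symm
    intro t ht
    by_contra hcon
    rw [himg, ← slice_nonempty_iff, not_nonempty_iff_eq_empty] at hcon
    apply ht
    simp [indicator, hcon]
  rw [h2, lintegral_image_eq_lintegral_abs_deriv_mul measurableSet_Ioo
    (fun τ hτ => (hd τ hτ).hasDerivWithinAt) hz.injOn, smul_eq_mul]
  have h3 : ∀ τ ∈ Ioo (0 : ℝ) 1, ENNReal.ofReal |volume.real A / volume.real (slice A (z τ))| *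
      T.indicator (fun t => volume (slice A t)) (z τ) =
      volume A * T.indicator 1 (z τ) := by
    intro τ hτ
    by_cases hT' : z τ ∈ T
    · have hb := hA.slice (himg ▸ mem_image_of_mem z hτ)
      have hp := hb.measure_pos
      have hf : volume (slice A (z τ)) ≠ ∞ := hb.isBounded.measure_lt_top.ne
      simp only [hT', indicator_of_mem, Pi.one_apply, mul_one]
      rw [abs_of_nonneg (by positivity), ENNReal.ofReal_div_of_pos hp,
        ofReal_measureReal hA.isBounded.measure_lt_top.ne, ofReal_measureReal hf]
      exact ENNReal.div_mul_cancel (hb.isOpen.measure_pos volume hb.nonempty).ne' hf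
    · simp [hT']
  rw [setLIntegral_congr_fun measurableSet_Ioo h3,
    lintegral_const_mul' _ _ hA.isBounded.measure_lt_top.ne]
  congr 1
  have h4 : (fun τ => T.indicator (1 : ℝ → ℝ≥0∞) (z τ)) = (z ⁻¹' T).indicator 1 := by
    ext τ; simp [indicator, mem_preimage]; rfl
  rw [h4, lintegral_indicator_one₀ (hzm.nullMeasurable hT)]

/-- Transporting along the quantile functions bounds the volume of a Minkowski combination. -/
lemma LogBrunnMinkowski.lintegral_le {n : ℕ} (h : LogBrunnMinkowski n)
    {A B : Set (Fin (n + 1) → ℝ)} (hA : IsOpenBody A) (hB : IsOpenBody B)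
    {s t : ℝ} (hs : 0 < s) (ht : 0 < t) (hst : s + t = 1) {z w : ℝ → ℝ}
    (hz : StrictMonoOn z (Ioo 0 1)) (hw : StrictMonoOn w (Ioo 0 1))
    (hzi : z '' Ioo 0 1 = (fun x : Fin (n + 1) → ℝ => x 0) '' A)
    (hwi : w '' Ioo 0 1 = (fun x : Fin (n + 1) → ℝ => x 0) '' B)
    (hzd : ∀ τ ∈ Ioo (0 : ℝ) 1, HasDerivAt z (volume.real A / volume.real (slice A (z τ))) τ)
    (hwd : ∀ τ ∈ Ioo (0 : ℝ) 1, HasDerivAt w (volume.real B / volume.real (slice B (w τ))) τ) :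
    ∫⁻ τ in Ioo (0 : ℝ) 1, ENNReal.ofReal
      ((s * (volume.real A / volume.real (slice A (z τ))) +
        t * (volume.real B / volume.real (slice B (w τ)))) *
        (volume.real (slice A (z τ)) ^ s * volume.real (slice B (w τ)) ^ t)) ≤
      volume (s • A + t • B) := by
  have hC := hA.combo hB hs t
  rw [volume_eq_lintegral_slice hC.isOpen.measurableSet]
  have hinj : InjOn (fun τ => s * z τ + t * w τ) (Ioo 0 1) := by
    refine StrictMonoOn.injOn fun x hx y hy hxy => ?_
    have h1 := hz hx hy hxy
    have h2 := hw hx hy hxy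
    gcongr
  refine le_trans ?_ (setLIntegral_le_lintegral ((fun τ => s * z τ + t * w τ) '' Ioo 0 1) _)
  rw [lintegral_image_eq_lintegral_abs_deriv_mul measurableSet_Ioo
    (fun τ hτ => HasDerivAt.hasDerivWithinAt (f := fun τ => s * z τ + t * w τ)
      (((hzd τ hτ).const_mul s).add ((hwd τ hτ).const_mul t))) hinj]
  refine setLIntegral_mono' measurableSet_Ioo fun τ hτ => ?_
  have hzA := hzi ▸ mem_image_of_mem z hτ
  have hwB := hwi ▸ mem_image_of_mem w hτ
  have hpA := (hA.slice hzA).measure_pos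
  have hpB := (hB.slice hwB).measure_pos
  have hle := h.slice_le hA hB hs ht hst hzA hwB
  rw [ENNReal.ofReal_mul (by positivity), abs_of_nonneg (by positivity)]
  gcongr
  refine (ENNReal.ofReal_le_ofReal hle).trans ?_
  exact ENNReal.ofReal_toReal_le

lemma rpow_mul_rpow_le_combo {s t a b x y : ℝ} (hs : 0 < s) (ht : 0 < t) (hst : s + t = 1)
    (ha : 0 < a) (hb : 0 < b) (hx : 0 < x) (hy : 0 < y) :
    a ^ s * b ^ t ≤ (s * (a / x) + t * (b / y)) * (x ^ s * y ^ t) := by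
  have h := Real.geom_mean_le_arith_mean2_weighted hs.le ht.le (div_pos ha hx).le
    (div_pos hb hy).le hst
  calc a ^ s * b ^ t = ((a / x) ^ s * (b / y) ^ t) * (x ^ s * y ^ t) := by
        rw [Real.div_rpow ha.le hx.le, Real.div_rpow hb.le hy.le]
        field_simp
    _ ≤ _ := by gcongr

theorem logBrunnMinkowski (n : ℕ) : LogBrunnMinkowski n := by
  induction n with
  | zero =>
    intro A B hA hB s t hs ht hst
    have h1 : ∀ C : Set (Fin 0 → ℝ), C.Nonempty → volume.real C = 1 := by
      intro C hC
      rw [Subsingleton.eq_univ_of_nonempty hC]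
      simp [Measure.real, Measure.volume_pi_eq_dirac (α := fun _ : Fin 0 => ℝ) finZeroElim]
    rw [h1 A hA.nonempty, h1 B hB.nonempty, h1 _ (hA.combo hB hs t).nonempty]
    simp
  | succ n ih =>
    intro A B hA hB s t hs ht hst
    obtain ⟨z, hz, hzi, hzd⟩ := ih.exists_quantile hA
    obtain ⟨w, hw, hwi, hwd⟩ := ih.exists_quantile hB
    have key := ih.lintegral_le hA hB hs ht hst hz hw hzi hwi hzd hwd
    have hpA := hA.measure_pos
    have hpB := hB.measure_pos
    have hfin : volume (s • A + t • B) ≠ ∞ := (hA.combo hB hs t).isBounded.measure_lt_top.ne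
    rw [Measure.real, Measure.real, Measure.real, ← ENNReal.ofReal_le_iff_le_toReal hfin]
    refine le_trans ?_ key
    calc _ = ∫⁻ τ in Ioo (0 : ℝ) 1, ENNReal.ofReal (volume.real A ^ s * volume.real B ^ t) := by
          simp [Measure.real]
      _ ≤ _ := by
          refine setLIntegral_mono' measurableSet_Ioo fun τ hτ => ENNReal.ofReal_le_ofReal ?_
          exact rpow_mul_rpow_le_combo hs ht hst hpA hpB
            (hA.slice (hzi ▸ mem_image_of_mem z hτ)).measure_pos
            (hB.slice (hwi ▸ mem_image_of_mem w hτ)).measure_pos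

lemma eq_of_half_combo_eq {V x y : ℝ} (hV : 0 < V) (hx : 0 < x) (hy : 0 < y)
    (h : (1 / 2 * (V / x) + 1 / 2 * (V / y)) * (x ^ (1 / 2 : ℝ) * y ^ (1 / 2 : ℝ)) = V) :
    x = y := by
  rw [← Real.sqrt_eq_rpow, ← Real.sqrt_eq_rpow] at h
  obtain ⟨u, hu, rfl⟩ : ∃ u, 0 < u ∧ u ^ 2 = x := ⟨√x, Real.sqrt_pos.2 hx, Real.sq_sqrt hx.le⟩
  obtain ⟨v, hv, rfl⟩ : ∃ v, 0 < v ∧ v ^ 2 = y := ⟨√y, Real.sqrt_pos.2 hy, Real.sq_sqrt hy.le⟩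
  rw [Real.sqrt_sq hu.le, Real.sqrt_sq hv.le] at h
  field_simp at h
  have : (u - v) ^ 2 = 0 := by nlinarith
  rw [pow_eq_zero_iff two_ne_zero, sub_eq_zero] at this
  rw [this]

/-- If two bodies of equal volume attain equality in the Brunn–Minkowski inequality, then their
first marginals are translates of each other. -/
lemma exists_fst_translate {n : ℕ} {A B : Set (Fin (n + 1) → ℝ)} (hA : IsOpenBody A)
    (hB : IsOpenBody B) (hV : volume.real B = volume.real A)
    (hC : volume.real ((1 / 2 : ℝ) • A + (1 / 2 : ℝ) • B) ≤ volume.real A) :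
    ∃ k : ℝ, (fun x : Fin (n + 1) → ℝ => x 0) '' B =
        (fun y => y + k) '' ((fun x : Fin (n + 1) → ℝ => x 0) '' A) ∧
      ∫ x in B, x 0 = (∫ x in A, x 0) + volume.real A * k := by
  have ih := logBrunnMinkowski n
  obtain ⟨z, hz, hzi, hzd⟩ := ih.exists_quantile hA
  obtain ⟨w, hw, hwi, hwd⟩ := ih.exists_quantile hB
  have hmapA := map_fst_eq_map_quantile hA hz hzi hzd
  have hmapB := map_fst_eq_map_quantile hB hw hwi hwd
  have hhalf : (0 : ℝ) < 1 / 2 := by norm_num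
  have key := ih.lintegral_le hA hB hhalf hhalf (by norm_num) hz hw hzi hwi hzd hwd
  have hpA := hA.measure_pos
  have hzc : ContinuousOn z (Ioo 0 1) := fun τ hτ => (hzd τ hτ).continuousAt.continuousWithinAt
  have hwc : ContinuousOn w (Ioo 0 1) := fun τ hτ => (hwd τ hτ).continuousAt.continuousWithinAt
  set V := volume.real A with hVdef
  rw [hV] at key hwd
  set f : ℝ → ℝ := fun τ => volume.real (slice A (z τ)) with hf
  set g : ℝ → ℝ := fun τ => volume.real (slice B (w τ)) with hg
  have hfpos : ∀ τ ∈ Ioo (0 : ℝ) 1, 0 < f τ := fun τ hτ =>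
    (hA.slice (hzi ▸ mem_image_of_mem z hτ)).measure_pos
  have hgpos : ∀ τ ∈ Ioo (0 : ℝ) 1, 0 < g τ := fun τ hτ =>
    (hB.slice (hwi ▸ mem_image_of_mem w hτ)).measure_pos
  have hfc : ContinuousOn f (Ioo 0 1) :=
    (ih.continuousOn_slice hA).comp hzc fun τ hτ => hzi ▸ mem_image_of_mem z hτ
  have hgc : ContinuousOn g (Ioo 0 1) :=
    (ih.continuousOn_slice hB).comp hwc fun τ hτ => hwi ▸ mem_image_of_mem w hτ
  set q : ℝ → ℝ := fun τ => (1 / 2 * (V / f τ) + 1 / 2 * (V / g τ)) *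
    (f τ ^ (1 / 2 : ℝ) * g τ ^ (1 / 2 : ℝ)) with hq
  have hqc : ContinuousOn q (Ioo 0 1) := by
    have h1 : ∀ τ ∈ Ioo (0 : ℝ) 1, f τ ≠ 0 := fun τ hτ => (hfpos τ hτ).ne'
    have h2 : ∀ τ ∈ Ioo (0 : ℝ) 1, g τ ≠ 0 := fun τ hτ => (hgpos τ hτ).ne'
    refine ((continuousOn_const.mul (continuousOn_const.div hfc h1)).add
      (continuousOn_const.mul (continuousOn_const.div hgc h2))).mul
      ((hfc.rpow_const fun τ _ => Or.inr hhalf.le).mul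
        (hgc.rpow_const fun τ _ => Or.inr hhalf.le))
  have hVq : ∀ τ ∈ Ioo (0 : ℝ) 1, V ≤ q τ := by
    intro τ hτ
    have := rpow_mul_rpow_le_combo hhalf hhalf (by norm_num) hpA hpA (hfpos τ hτ) (hgpos τ hτ)
    rwa [← Real.rpow_add hpA, show (1 / 2 + 1 / 2 : ℝ) = 1 by norm_num, Real.rpow_one] at this
  have hf_int : ∫⁻ τ in Ioo (0 : ℝ) 1, ENNReal.ofReal (q τ) ≤
      ∫⁻ τ in Ioo (0 : ℝ) 1, ENNReal.ofReal V := by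
    refine key.trans ?_
    have hfin : volume ((1 / 2 : ℝ) • A + (1 / 2 : ℝ) • B) ≠ ∞ :=
      (hA.combo hB hhalf _).isBounded.measure_lt_top.ne
    have := ENNReal.ofReal_le_ofReal hC
    rw [ofReal_measureReal hfin] at this
    simpa using this
  have hae : (fun _ => ENNReal.ofReal V) =ᵐ[volume.restrict (Ioo (0 : ℝ) 1)]
      fun τ => ENNReal.ofReal (q τ) := by
    refine ae_eq_of_ae_le_of_lintegral_le ?_ (by simp)
      (hqc.aemeasurable measurableSet_Ioo).ennreal_ofReal hf_int
    refine (ae_restrict_iff' measurableSet_Ioo).2 (Filter.Eventually.of_forall fun τ hτ => ?_)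
    exact ENNReal.ofReal_le_ofReal (hVq τ hτ)
  have heq := Measure.eqOn_open_of_ae_eq hae isOpen_Ioo continuousOn_const
    (ENNReal.continuous_ofReal.comp_continuousOn hqc)
  have hfg : ∀ τ ∈ Ioo (0 : ℝ) 1, f τ = g τ := by
    intro τ hτ
    have h1 := heq hτ
    have h2 : V = q τ := by
      have := congrArg ENNReal.toReal h1
      rwa [ENNReal.toReal_ofReal hpA.le, ENNReal.toReal_ofReal (hpA.le.trans (hVq τ hτ))] at this
    exact eq_of_half_combo_eq hpA (hfpos τ hτ) (hgpos τ hτ) h2.symm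
  have hdiff : ∀ τ ∈ Ioo (0 : ℝ) 1, HasDerivAt (fun τ => w τ - z τ) 0 τ := by
    intro τ hτ
    have := (hwd τ hτ).sub (hzd τ hτ)
    have h0 : V / volume.real (slice B (w τ)) - V / volume.real (slice A (z τ)) = 0 := by
      have := hfg τ hτ
      simp only [hf, hg] at this
      rw [this, sub_self]
    rwa [h0] at this
  have hmid : (1 / 2 : ℝ) ∈ Ioo (0 : ℝ) 1 := by constructor <;> norm_num
  set k := w (1 / 2) - z (1 / 2) with hk
  have hwz : ∀ τ ∈ Ioo (0 : ℝ) 1, w τ = z τ + k := by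
    intro τ hτ
    have := isOpen_Ioo.is_const_of_deriv_eq_zero (convex_Ioo (0 : ℝ) 1).isPreconnected
      (fun τ hτ => (hdiff τ hτ).differentiableAt.differentiableWithinAt)
      (fun τ hτ => (hdiff τ hτ).deriv) hτ hmid
    linarith
  refine ⟨k, ?_, ?_⟩
  · rw [← hzi, ← hwi, image_image]
    exact image_congr hwz
  · have hm0 : Measurable fun x : Fin (n + 1) → ℝ => x 0 := measurable_pi_apply 0
    have hzm : AEMeasurable z (volume.restrict (Ioo (0 : ℝ) 1)) :=
      hzc.aemeasurable measurableSet_Ioo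
    have hwm : AEMeasurable w (volume.restrict (Ioo (0 : ℝ) 1)) :=
      hwc.aemeasurable measurableSet_Ioo
    have e1 : ∫ x in A, x 0 = V * ∫ τ in Ioo (0 : ℝ) 1, z τ := by
      have h1 : ∫ x in A, x 0 = ∫ y, y ∂((volume.restrict A).map fun x => x 0) :=
        (integral_map hm0.aemeasurable aestronglyMeasurable_id).symm
      rw [h1, hmapA, integral_smul_measure,
        integral_map hzm (f := fun y => y) aestronglyMeasurable_id]
      rfl
    have e2 : ∫ x in B, x 0 = V * ∫ τ in Ioo (0 : ℝ) 1, w τ := by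
      have h1 : ∫ x in B, x 0 = ∫ y, y ∂((volume.restrict B).map fun x => x 0) :=
        (integral_map hm0.aemeasurable aestronglyMeasurable_id).symm
      rw [h1, hmapB, integral_smul_measure,
        integral_map hwm (f := fun y => y) aestronglyMeasurable_id, ← hV]
      rfl
    have hzint : IntegrableOn z (Ioo 0 1) := by
      obtain ⟨a, b, hab, hJ⟩ := hA.exists_Ioo
      refine Integrable.of_bound hzm.aestronglyMeasurable (max |a| |b|) ?_
      refine (ae_restrict_iff' measurableSet_Ioo).2 (Filter.Eventually.of_forall fun τ hτ => ?_)
      have := mem_image_of_mem z hτ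
      rw [hzi, hJ] at this
      exact abs_le_max_abs_abs this.1.le this.2.le
    rw [e1, e2, setIntegral_congr_fun measurableSet_Ioo hwz, integral_add hzint (by simp)]
    simp
    ring

lemma exists_linearEquiv_fst {n : ℕ} (f : (Fin (n + 1) → ℝ) →ₗ[ℝ] ℝ) (hf : f ≠ 0) :
    ∃ P : (Fin (n + 1) → ℝ) ≃ₗ[ℝ] (Fin (n + 1) → ℝ), ∀ x, P x 0 = f x := by
  obtain ⟨j, hj⟩ : ∃ j, f (Pi.single j 1) ≠ 0 := by
    by_contra! hcon
    exact hf (LinearMap.pi_ext' fun i => LinearMap.ext_ring (by simpa using hcon i))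
  let Q : (Fin (n + 1) → ℝ) →ₗ[ℝ] (Fin (n + 1) → ℝ) :=
    LinearMap.pi fun i => if i = 0 then f else LinearMap.proj (Equiv.swap 0 j i)
  have hQ : Function.Injective Q := by
    refine (injective_iff_map_eq_zero Q).2 fun x hx => ?_
    have h0 : f x = 0 := by simpa [Q] using congrFun hx 0
    have hi : ∀ i, i ≠ j → x i = 0 := by
      intro i hij
      have hne : Equiv.swap 0 j i ≠ 0 := by
        intro h
        apply hij
        have := congrArg (Equiv.swap 0 j) h
        simpa using this
      have := congrFun hx (Equiv.swap 0 j i)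
      simpa [Q, hne] using this
    have hx' : x = x j • Pi.single j 1 := by
      ext i
      by_cases h : i = j
      · subst h; simp
      · simp [hi i h, h]
    have hxj : x j = 0 := by
      rw [hx', map_smul, smul_eq_mul] at h0
      simpa [hj] using h0
    rw [hx', hxj, zero_smul]
  exact ⟨LinearEquiv.ofInjectiveEndo Q hQ, fun x => by simp [Q]⟩

lemma IsOpenBody.integrableOn_id {n : ℕ} {A : Set (Fin n → ℝ)} (hA : IsOpenBody A) :
    IntegrableOn (fun x : Fin n → ℝ => x) A :=
  (continuousOn_id.integrableOn_compact hA.isBounded.isCompact_closure).mono_set subset_closure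

lemma IsOpenBody.image_linearEquiv {E F : Type*} [NormedAddCommGroup E] [NormedSpace ℝ E]
    [NormedAddCommGroup F] [NormedSpace ℝ F] {A : Set E} (hA : IsOpenBody A) (P : E ≃L[ℝ] F) :
    IsOpenBody (P '' A) where
  isOpen := P.toHomeomorph.isOpenMap _ hA.isOpen
  convex := hA.convex.linear_image P.toLinearEquiv.toLinearMap
  isBounded := P.lipschitz.isBounded_image hA.isBounded
  nonempty := hA.nonempty.image _

lemma image_combo {E F : Type*} [NormedAddCommGroup E] [NormedSpace ℝ E]
    [NormedAddCommGroup F] [NormedSpace ℝ F] (A B : Set E) (P : E ≃L[ℝ] F) (s t : ℝ) :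
    P '' (s • A + t • B) = s • P '' A + t • P '' B := by
  rw [image_add, image_smul_set, image_smul_set]

lemma subset_of_brunnMinkowski_eq {n : ℕ} {A B : Set (Fin (n + 1) → ℝ)} (hA : IsOpenBody A)
    (hB : IsOpenBody B) (hV : volume.real B = volume.real A)
    (hC : volume.real ((1 / 2 : ℝ) • A + (1 / 2 : ℝ) • B) ≤ volume.real A)
    (hcent : ∫ x in B, x = ∫ x in A, x) : B ⊆ A := by
  intro x hx
  by_contra hxA
  obtain ⟨f, hf⟩ := geometric_hahn_banach_open_point hA.convex hA.isOpen hxA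
  have hf0 : (f : (Fin (n + 1) → ℝ) →ₗ[ℝ] ℝ) ≠ 0 := by
    intro h0
    obtain ⟨a, ha⟩ := hA.nonempty
    have h := hf a ha
    have h' : ∀ y, f y = 0 := fun y => by simpa using LinearMap.congr_fun h0 y
    simp [h'] at h
  obtain ⟨P', hP'⟩ := exists_linearEquiv_fst _ hf0
  set P := P'.toContinuousLinearEquiv with hPdef
  have hP : ∀ y, P y 0 = f y := fun y => by simpa [hPdef] using hP' y
  have hvol : ∀ S : Set (Fin (n + 1) → ℝ), volume.real (P '' S) =
      |LinearMap.det (P' : (Fin (n + 1) → ℝ) →ₗ[ℝ] (Fin (n + 1) → ℝ))| * volume.real S := by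
    intro S
    have h := Measure.addHaar_image_linearMap volume
      (P' : (Fin (n + 1) → ℝ) →ₗ[ℝ] (Fin (n + 1) → ℝ)) S
    simp only [Measure.real]
    rw [← ENNReal.toReal_ofReal (abs_nonneg (LinearMap.det _)), ← ENNReal.toReal_mul, ← h]
    rfl
  have hcentroid : ∀ {S : Set (Fin (n + 1) → ℝ)}, IsOpenBody S → ∫ y in P '' S, y 0 =
      |LinearMap.det (P' : (Fin (n + 1) → ℝ) →ₗ[ℝ] (Fin (n + 1) → ℝ))| * f (∫ y in S, y) := by
    intro S hS
    rw [integral_image_eq_integral_abs_det_fderiv_smul volume hS.isOpen.measurableSet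
      (fun y _ => P.hasFDerivAt.hasFDerivWithinAt) P.injective.injOn]
    have hdet : (P : (Fin (n + 1) → ℝ) →L[ℝ] (Fin (n + 1) → ℝ)).det =
      LinearMap.det (P' : (Fin (n + 1) → ℝ) →ₗ[ℝ] (Fin (n + 1) → ℝ)) := rfl
    simp only [hP, hdet, smul_eq_mul]
    rw [integral_const_mul, f.integral_comp_comm hS.integrableOn_id]
  have hd : 0 < |LinearMap.det (P' : (Fin (n + 1) → ℝ) →ₗ[ℝ] (Fin (n + 1) → ℝ))| :=
    abs_pos.2 P'.isUnit_det'.ne_zero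
  obtain ⟨k, hk, hk'⟩ := exists_fst_translate (hA.image_linearEquiv P) (hB.image_linearEquiv P)
    (by rw [hvol, hvol, hV]) (by
      rw [← image_combo, hvol, hvol]
      exact mul_le_mul_of_nonneg_left hC hd.le)
  rw [hcentroid hA, hcentroid hB, hcent] at hk'
  have hk0 : k = 0 := by
    have hp := (hA.image_linearEquiv P).measure_pos
    have : volume.real (P '' A) * k = 0 := by linarith
    exact (mul_eq_zero.1 this).resolve_left hp.ne'
  have hmem : f x ∈ (fun x : Fin (n + 1) → ℝ => x 0) '' (P '' B) :=
    ⟨P x, mem_image_of_mem _ hx, hP x⟩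
  rw [hk, hk0] at hmem
  simp only [add_zero, image_id'] at hmem
  obtain ⟨_, ⟨a, ha, rfl⟩, hfa⟩ := hmem
  simp only [hP] at hfa
  exact (hf a ha).ne hfa

lemma IsOpenBody.vadd {E : Type*} [NormedAddCommGroup E] [NormedSpace ℝ E] {A : Set E}
    (hA : IsOpenBody A) (v : E) : IsOpenBody (v +ᵥ A) where
  isOpen := hA.isOpen.vadd v
  convex := hA.convex.vadd v
  isBounded := hA.isBounded.vadd v
  nonempty := hA.nonempty.vadd_set

lemma smul_vadd_set_eq {E : Type*} [NormedAddCommGroup E] [NormedSpace ℝ E] (r : ℝ) (v : E)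
    (A : Set E) : r • (v +ᵥ A) = (r • v) +ᵥ (r • A) := by
  simp only [← image_smul, ← image_vadd, image_image, vadd_eq_add, smul_add]

/-- Bodies of equal volume attaining equality in the Brunn–Minkowski inequality are translates. -/
theorem exists_vadd_of_brunnMinkowski_eq {n : ℕ} {A B : Set (Fin (n + 1) → ℝ)}
    (hA : IsOpenBody A) (hB : IsOpenBody B) (hV : volume.real B = volume.real A)
    (hC : volume.real ((1 / 2 : ℝ) • A + (1 / 2 : ℝ) • B) ≤ volume.real A) :
    ∃ v : Fin (n + 1) → ℝ, B = v +ᵥ A := by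
  set v := (volume.real A)⁻¹ • ((∫ x in B, x) - ∫ x in A, x) with hv
  have hA' := hA.vadd v
  have hpA := hA.measure_pos
  have hV' : volume.real (v +ᵥ A) = volume.real A := by simp [Measure.real]
  have hcent : ∫ x in v +ᵥ A, x = ∫ x in B, x := by
    have h1 : ∫ x in v +ᵥ A, x = ∫ x in A, (v + x) := by
      have := (measurePreserving_add_left volume v).setIntegral_image_emb
        (measurableEmbedding_addLeft v) (fun x => x) A
      exact this
    have hci : IntegrableOn (fun _ : Fin (n + 1) → ℝ => v) A :=
      integrableOn_const hA.isBounded.measure_lt_top.ne (by simp)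
    rw [h1, integral_add hci hA.integrableOn_id]
    simp only [integral_const, hv]
    simp [smul_smul, hpA.ne']
  have hC' : volume.real ((1 / 2 : ℝ) • (v +ᵥ A) + (1 / 2 : ℝ) • B) ≤ volume.real A := by
    have : (1 / 2 : ℝ) • (v +ᵥ A) + (1 / 2 : ℝ) • B =
        ((1 / 2 : ℝ) • v) +ᵥ ((1 / 2 : ℝ) • A + (1 / 2 : ℝ) • B) := by
      rw [smul_vadd_set_eq, vadd_add_assoc]
    rw [this]
    simpa [Measure.real] using hC
  refine ⟨v, Subset.antisymm ?_ ?_⟩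
  · exact subset_of_brunnMinkowski_eq hA' hB (hV.trans hV'.symm) (hC'.trans hV'.ge) hcent.symm
  · refine subset_of_brunnMinkowski_eq hB hA' (hV'.trans hV.symm) ?_ hcent
    rw [add_comm ((1 / 2 : ℝ) • B)]
    exact hC'.trans hV.ge

/-- The Brunn–Minkowski inequality for open bodies. -/
theorem IsOpenBody.pow_le_volume_combo {m : ℕ} {A B : Set (Fin m → ℝ)} (hA : IsOpenBody A)
    (hB : IsOpenBody B) {a b s t : ℝ} (ha : 0 < a) (hb : 0 < b) (hs : 0 < s) (ht : 0 < t)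
    (hvA : volume.real A = a ^ m) (hvB : volume.real B = b ^ m) :
    (s * a + t * b) ^ m ≤ volume.real (s • A + t • B) := by
  have hw : 0 < s * a + t * b := by positivity
  set w := s * a + t * b with hwdef
  have hsc : ∀ {C : Set (Fin m → ℝ)} {c : ℝ}, IsOpenBody C → 0 < c → IsOpenBody (c⁻¹ • C) := by
    intro C c hC hc
    exact ⟨hC.isOpen.smul₀ (inv_pos.2 hc).ne', hC.convex.smul _, hC.isBounded.smul₀ _,
      hC.nonempty.smul_set⟩
  have hvol : ∀ (C : Set (Fin m → ℝ)) {c : ℝ}, 0 < c →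
      volume.real (c⁻¹ • C) = (c ^ m)⁻¹ * volume.real C := by
    intro C c hc
    simp only [Measure.real, Measure.addHaar_smul, ENNReal.toReal_mul]
    rw [ENNReal.toReal_ofReal (abs_nonneg _), abs_of_pos (by positivity)]
    simp
  have key := logBrunnMinkowski m (hsc hA ha) (hsc hB hb) (s := s * a / w) (t := t * b / w)
    (by positivity) (by positivity) (by field_simp; exact hwdef.symm)
  have h1 : (s * a / w) • a⁻¹ • A + (t * b / w) • b⁻¹ • B = w⁻¹ • (s • A + t • B) := by
    simp only [smul_add, smul_smul]
    congr 2 <;> field_simp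
  rw [h1, hvol _ ha, hvol _ hb, hvol _ hw, hvA, hvB, inv_mul_cancel₀ (by positivity),
    inv_mul_cancel₀ (by positivity), Real.one_rpow, Real.one_rpow, one_mul,
    ← div_eq_inv_mul, one_le_div (by positivity)] at key
  exact key

namespace IsConvexBody
variable {m : ℕ} {K L : Set (Euc m)}

lemma convex (hK : IsConvexBody K) : Convex ℝ K := hK.1
lemma isCompact (hK : IsConvexBody K) : IsCompact K := hK.2.1
lemma interior_nonempty (hK : IsConvexBody K) : (interior K).Nonempty := hK.2.2

lemma closure_interior (hK : IsConvexBody K) : closure (interior K) = K := by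
  rw [hK.convex.closure_interior_eq_closure_of_nonempty_interior hK.interior_nonempty,
    hK.isCompact.isClosed.closure_eq]

lemma isOpenBody (hK : IsConvexBody K) :
    IsOpenBody (EuclideanSpace.equiv (Fin m) ℝ '' interior K) :=
  IsOpenBody.image_linearEquiv ⟨isOpen_interior, hK.convex.interior,
    hK.isCompact.isBounded.subset interior_subset, hK.interior_nonempty⟩ _

lemma volume_interior (hK : IsConvexBody K) : volume (interior K) = volume K := by
  refine measure_congr ?_
  have := hK.convex.addHaar_frontier volume
  exact interior_ae_eq_of_null_frontier this

lemma volume_image_equiv (S : Set (Euc m)) :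
    volume (EuclideanSpace.equiv (Fin m) ℝ '' S) = volume S := by
  have h := (EuclideanSpace.volume_preserving_symm_measurableEquiv_toLp (Fin m)).symm
  rw [← h.measure_preimage_equiv S]
  congr 1
  ext x
  constructor
  · rintro ⟨y, hy, rfl⟩
    exact hy
  · intro hx
    exact ⟨_, hx, rfl⟩

lemma volume_real_isOpenBody (hK : IsConvexBody K) :
    volume.real (EuclideanSpace.equiv (Fin m) ℝ '' interior K) = volume.real K := by
  rw [Measure.real, volume_image_equiv, hK.volume_interior, Measure.real]

lemma volume_pos (hK : IsConvexBody K) : 0 < volume.real K := by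
  rw [← hK.volume_real_isOpenBody]; exact hK.isOpenBody.measure_pos

lemma volume_ne_top (hK : IsConvexBody K) : volume K ≠ ∞ := hK.isCompact.measure_lt_top.ne

lemma smul (hK : IsConvexBody K) {c : ℝ} (hc : 0 < c) : IsConvexBody (c • K) :=
  ⟨hK.convex.smul c, hK.isCompact.smul c, by
    rw [interior_smul₀ hc.ne']; exact hK.interior_nonempty.smul_set⟩

lemma vadd (hK : IsConvexBody K) (v : Euc m) : IsConvexBody (v +ᵥ K) :=
  ⟨hK.convex.vadd v, hK.isCompact.vadd v, by
    rw [interior_vadd]; exact hK.interior_nonempty.vadd_set⟩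

lemma add (hK : IsConvexBody K) (hL : IsConvexBody L) : IsConvexBody (K + L) :=
  ⟨hK.convex.add hL.convex, hK.isCompact.add hL.isCompact,
    (hK.interior_nonempty.add hL.interior_nonempty).mono
      (interior_maximal (add_subset_add interior_subset interior_subset)
        isOpen_interior.add_right)⟩

/-- The Brunn–Minkowski inequality for convex bodies. -/
theorem pow_le_volume_combo (hK : IsConvexBody K) (hL : IsConvexBody L) {a b s t : ℝ}
    (ha : 0 < a) (hb : 0 < b) (hs : 0 < s) (ht : 0 < t)
    (hvK : volume.real K = a ^ m) (hvL : volume.real L = b ^ m) :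
    (s * a + t * b) ^ m ≤ volume.real (s • K + t • L) := by
  have h := hK.isOpenBody.pow_le_volume_combo hL.isOpenBody ha hb hs ht
    (hK.volume_real_isOpenBody.trans hvK) (hL.volume_real_isOpenBody.trans hvL)
  refine h.trans ?_
  rw [← image_combo, Measure.real, volume_image_equiv]
  exact measureReal_mono (add_subset_add (smul_set_mono interior_subset)
    (smul_set_mono interior_subset)) ((hK.smul hs).add (hL.smul ht)).volume_ne_top

/-- Convex bodies of equal volume attaining equality in the Brunn–Minkowski inequality are
translates. -/
theorem exists_vadd_of_volume_add_le (hm : m ≠ 0) (hK : IsConvexBody K) (hL : IsConvexBody L)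
    (hV : volume.real L = volume.real K) (hC : volume.real (K + L) ≤ 2 ^ m * volume.real K) :
    ∃ v : Euc m, L = v +ᵥ K := by
  obtain ⟨n, rfl⟩ := Nat.exists_eq_succ_of_ne_zero hm
  set e := EuclideanSpace.equiv (Fin (n + 1)) ℝ
  obtain ⟨v, hv⟩ := exists_vadd_of_brunnMinkowski_eq hK.isOpenBody hL.isOpenBody
    (by rw [hK.volume_real_isOpenBody, hL.volume_real_isOpenBody, hV]) (by
      rw [← image_combo, Measure.real, volume_image_equiv, hK.volume_real_isOpenBody,
        ← smul_add, Measure.addHaar_smul, ENNReal.toReal_mul, ENNReal.toReal_ofReal (abs_nonneg _)]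
      have h1 : volume.real (interior K + interior L) ≤ 2 ^ (n + 1) * volume.real K :=
        (measureReal_mono (add_subset_add interior_subset interior_subset)
          (hK.add hL).volume_ne_top).trans hC
      rw [abs_of_pos (by positivity)]
      simp only [finrank_euclideanSpace, Fintype.card_fin]
      calc _ ≤ (1 / 2 : ℝ) ^ (n + 1) * (2 ^ (n + 1) * volume.real K) := by
            gcongr; exact h1
        _ = _ := by rw [← mul_assoc, ← mul_pow]; norm_num)
  refine ⟨e.symm v, ?_⟩
  have h2 : interior L = e.symm v +ᵥ interior K := by
    apply e.injective.image_injective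
    rw [hv]
    simp only [← image_vadd, image_image, vadd_eq_add, map_add, e.apply_symm_apply]
    rfl
  rw [← hL.closure_interior, h2, closure_vadd, hK.closure_interior]

end IsConvexBody

/-- The support function of a set. -/
def supportFun {m : ℕ} (L : Set (Euc m)) (u : Euc m) : ℝ := sSup ((fun y => ⟪y, u⟫) '' L)

section Support
variable {m : ℕ} {K L : Set (Euc m)}

lemma inner_le_supportFun (hL : IsCompact L) {y : Euc m} (hy : y ∈ L) (u : Euc m) :
    ⟪y, u⟫ ≤ supportFun L u :=
  le_csSup (hL.image (by fun_prop)).bddAbove (mem_image_of_mem _ hy)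

lemma supportFun_le (hL : L.Nonempty) {u : Euc m} {c : ℝ} (h : ∀ y ∈ L, ⟪y, u⟫ ≤ c) :
    supportFun L u ≤ c :=
  csSup_le (hL.image _) (by rintro _ ⟨y, hy, rfl⟩; exact h y hy)

lemma exists_inner_eq_supportFun (hL : IsCompact L) (hne : L.Nonempty) (u : Euc m) :
    ∃ y ∈ L, ⟪y, u⟫ = supportFun L u := by
  obtain ⟨y, hy, h⟩ := (hL.image (f := fun y => ⟪y, u⟫) (by fun_prop)).sSup_mem (hne.image _)
  exact ⟨y, hy, h⟩

lemma supportFun_nonneg (hL : IsCompact L) (h0 : (0 : Euc m) ∈ L) (u : Euc m) :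
    0 ≤ supportFun L u := by
  simpa using inner_le_supportFun hL h0 u

lemma supportFun_smul_right (hL : IsCompact L) (hne : L.Nonempty) {c : ℝ} (hc : 0 ≤ c)
    (u : Euc m) : supportFun L (c • u) = c * supportFun L u := by
  refine le_antisymm (supportFun_le hne fun y hy => ?_) ?_
  · rw [inner_smul_right]
    exact mul_le_mul_of_nonneg_left (inner_le_supportFun hL hy u) hc
  · obtain ⟨y, hy, h⟩ := exists_inner_eq_supportFun hL hne u
    rw [← h, ← inner_smul_right]
    exact inner_le_supportFun hL hy _

lemma supportFun_smul_left (hL : IsCompact L) (hne : L.Nonempty) {c : ℝ} (hc : 0 ≤ c)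
    (u : Euc m) : supportFun (c • L) u = c * supportFun L u := by
  refine le_antisymm (supportFun_le hne.smul_set ?_) ?_
  · rintro _ ⟨y, hy, rfl⟩
    simp only [real_inner_smul_left]
    exact mul_le_mul_of_nonneg_left (inner_le_supportFun hL hy u) hc
  · obtain ⟨y, hy, h⟩ := exists_inner_eq_supportFun hL hne u
    rw [← h, ← real_inner_smul_left]
    exact inner_le_supportFun (hL.smul c) (smul_mem_smul_set hy) _

lemma supportFun_add (hK : IsCompact K) (hKn : K.Nonempty) (hL : IsCompact L) (hLn : L.Nonempty)
    (u : Euc m) : supportFun (K + L) u = supportFun K u + supportFun L u := by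
  refine le_antisymm (supportFun_le (hKn.add hLn) ?_) ?_
  · rintro _ ⟨x, hx, y, hy, rfl⟩
    simp only [inner_add_left]
    exact add_le_add (inner_le_supportFun hK hx u) (inner_le_supportFun hL hy u)
  · obtain ⟨x, hx, h⟩ := exists_inner_eq_supportFun hK hKn u
    obtain ⟨y, hy, h'⟩ := exists_inner_eq_supportFun hL hLn u
    rw [← h, ← h', ← inner_add_left]
    exact inner_le_supportFun (hK.add hL) (add_mem_add hx hy) _

lemma exists_lipschitzWith_supportFun (hL : IsCompact L) (hne : L.Nonempty) :
    ∃ C, LipschitzWith C (supportFun L) := by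
  obtain ⟨R, hR⟩ := hL.isBounded.exists_norm_le
  have key : ∀ u v, supportFun L u ≤ supportFun L v + max R 0 * ‖u - v‖ := by
    intro u v
    refine supportFun_le hne fun y hy => ?_
    have h1 : ⟪y, u⟫ = ⟪y, v⟫ + ⟪y, u - v⟫ := by rw [inner_sub_right]; ring
    rw [h1]
    refine add_le_add (inner_le_supportFun hL hy v) ((real_inner_le_norm _ _).trans ?_)
    gcongr
    exact (hR y hy).trans (le_max_left _ _)
  refine ⟨(max R 0).toNNReal, LipschitzWith.of_le_add_mul' _ fun u v => ?_⟩
  rw [dist_eq_norm]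
  simpa using key u v

lemma continuous_supportFun (hL : IsCompact L) (hne : L.Nonempty) : Continuous (supportFun L) :=
  (exists_lipschitzWith_supportFun hL hne).choose_spec.continuous

end Support

/-- The subgradient inequality at a point of differentiability. -/
lemma ConvexOn.add_fderiv_le {E : Type*} [NormedAddCommGroup E] [NormedSpace ℝ E] {g : E → ℝ}
    (hg : ConvexOn ℝ univ g) {x : E} (hx : DifferentiableAt ℝ g x) (y : E) :
    g x + fderiv ℝ g x (y - x) ≤ g y := by
  have h1 : HasDerivAt (fun t : ℝ => g (x + t • (y - x))) (fderiv ℝ g x (y - x)) 0 := by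
    have h2 : HasDerivAt (fun t : ℝ => x + t • (y - x)) (y - x) 0 := by
      simpa using ((hasDerivAt_id (0 : ℝ)).smul_const (y - x)).const_add x
    have h3 : HasFDerivAt g (fderiv ℝ g x) (x + (0 : ℝ) • (y - x)) := by
      simpa using hx.hasFDerivAt
    exact h3.comp_hasDerivAt (0 : ℝ) h2
  have h4 := h1.tendsto_slope_zero_right
  have h5 : fderiv ℝ g x (y - x) ≤ g y - g x := by
    refine le_of_tendsto h4 ?_
    filter_upwards [Ioo_mem_nhdsGT (zero_lt_one (α := ℝ))] with t ht
    have hc := hg.2 (mem_univ x) (mem_univ y) (sub_nonneg.2 ht.2.le) ht.1.le (by ring)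
    have h6 : (1 - t) • x + t • y = x + t • (y - x) := by module
    rw [h6] at hc
    simp only [zero_add, zero_smul, add_zero, smul_eq_mul] at hc ⊢
    rw [inv_mul_le_iff₀ ht.1]
    linarith
  linarith

namespace IsConvexBody
variable {m : ℕ} {K L : Set (Euc m)}

lemma mem_nhds (h0 : (0 : Euc m) ∈ interior K) : K ∈ 𝓝 (0 : Euc m) :=
  mem_interior_iff_mem_nhds.1 h0

lemma absorbent (h0 : (0 : Euc m) ∈ interior K) : Absorbent ℝ K :=
  absorbent_nhds_zero (mem_nhds h0)

lemma gauge_le_one_iff (hK : IsConvexBody K) (h0 : (0 : Euc m) ∈ interior K) {x : Euc m} :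
    gauge K x ≤ 1 ↔ x ∈ K := by
  rw [gauge_le_one_iff_mem_closure hK.convex (mem_nhds h0), hK.isCompact.isClosed.closure_eq]

lemma gauge_le_iff (hK : IsConvexBody K) (h0 : (0 : Euc m) ∈ interior K) {x : Euc m} {s : ℝ}
    (hs : 0 < s) : gauge K x ≤ s ↔ x ∈ s • K := by
  rw [mem_smul_set_iff_inv_smul_mem₀ hs.ne', ← hK.gauge_le_one_iff h0,
    gauge_smul_of_nonneg (inv_pos.2 hs).le, smul_eq_mul, inv_mul_le_iff₀ hs, mul_one]

lemma gauge_pos (hK : IsConvexBody K) (h0 : (0 : Euc m) ∈ interior K) {x : Euc m} (hx : x ≠ 0) :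
    0 < gauge K x :=
  (_root_.gauge_pos (absorbent h0)
    (NormedSpace.isVonNBounded_iff ℝ |>.2 hK.isCompact.isBounded)).2 hx

lemma convexOn_gauge (hK : IsConvexBody K) (h0 : (0 : Euc m) ∈ interior K) :
    ConvexOn ℝ univ (gauge K) := by
  refine ⟨convex_univ, fun x _ y _ a b ha hb _ => ?_⟩
  refine (gauge_add_le hK.convex (absorbent h0) _ _).trans ?_
  rw [gauge_smul_of_nonneg ha, gauge_smul_of_nonneg hb]

lemma exists_lipschitzWith_gauge (hK : IsConvexBody K) (h0 : (0 : Euc m) ∈ interior K) :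
    ∃ C, LipschitzWith C (gauge K) := by
  obtain ⟨r, hr, h⟩ := Metric.mem_nhds_iff.1 (mem_nhds h0)
  exact ⟨_, hK.convex.lipschitzWith_gauge (r := ⟨r, hr.le⟩) hr h⟩

lemma continuous_gauge (hK : IsConvexBody K) (h0 : (0 : Euc m) ∈ interior K) :
    Continuous (gauge K) := _root_.continuous_gauge hK.convex (mem_nhds h0)

lemma ae_differentiableAt_gauge (hK : IsConvexBody K) (h0 : (0 : Euc m) ∈ interior K) :
    ∀ᵐ x : Euc m, DifferentiableAt ℝ (gauge K) x :=
  (hK.exists_lipschitzWith_gauge h0).choose_spec.ae_differentiableAt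

lemma fderiv_gauge_self {x : Euc m} (hx : DifferentiableAt ℝ (gauge K) x) :
    fderiv ℝ (gauge K) x x = gauge K x := by
  have h1 : HasDerivAt (fun t : ℝ => gauge K (x + t • x)) (fderiv ℝ (gauge K) x x) 0 := by
    have h2 : HasDerivAt (fun t : ℝ => x + t • x) x 0 := by
      simpa using ((hasDerivAt_id (0 : ℝ)).smul_const x).const_add x
    have h3 : HasFDerivAt (gauge K) (fderiv ℝ (gauge K) x) (x + (0 : ℝ) • x) := by
      simpa using hx.hasFDerivAt
    exact h3.comp_hasDerivAt (0 : ℝ) h2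
  have h4 : HasDerivAt (fun t : ℝ => gauge K (x + t • x)) (gauge K x) 0 := by
    have h5 : HasDerivAt (fun t : ℝ => (1 + t) * gauge K x) (gauge K x) 0 := by
      simpa using ((hasDerivAt_id (0 : ℝ)).const_add 1).mul_const (gauge K x)
    refine h5.congr_of_eventuallyEq ?_
    filter_upwards [Ioi_mem_nhds (show (-1 : ℝ) < 0 by norm_num)] with t ht
    have : x + t • x = (1 + t) • x := by module
    rw [this, gauge_smul_of_nonneg (by linarith [mem_Ioi.1 ht]), smul_eq_mul]
  exact h1.unique h4

lemma fderiv_gauge_le (hK : IsConvexBody K) (h0 : (0 : Euc m) ∈ interior K) {x : Euc m}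
    (hx : DifferentiableAt ℝ (gauge K) x) (y : Euc m) :
    fderiv ℝ (gauge K) x y ≤ gauge K y := by
  have := (hK.convexOn_gauge h0).add_fderiv_le hx y
  rw [map_sub, fderiv_gauge_self hx] at this
  linarith

lemma inner_gradient {f : Euc m → ℝ} (x y : Euc m) :
    ⟪y, gradient f x⟫ = fderiv ℝ f x y := by
  rw [real_inner_comm, gradient, InnerProductSpace.toDual_symm_apply]

lemma measurable_gradient {f : Euc m → ℝ} : Measurable (gradient f) :=
  (InnerProductSpace.toDual ℝ (Euc m)).symm.continuous.measurable.comp (measurable_fderiv ℝ f)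

lemma zero_mem (h0 : (0 : Euc m) ∈ interior K) : (0 : Euc m) ∈ K := interior_subset h0

lemma supportFun_gradient_gauge (hK : IsConvexBody K) (h0 : (0 : Euc m) ∈ interior K)
    {x : Euc m} (hx : DifferentiableAt ℝ (gauge K) x) (hx0 : x ≠ 0) :
    supportFun K (gradient (gauge K) x) = 1 := by
  refine le_antisymm (supportFun_le ⟨0, zero_mem h0⟩ fun y hy => ?_) ?_
  · rw [inner_gradient]
    exact (hK.fderiv_gauge_le h0 hx y).trans ((hK.gauge_le_one_iff h0).2 hy)
  · have hp := hK.gauge_pos h0 hx0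
    have hmem : (gauge K x)⁻¹ • x ∈ K := by
      rw [← hK.gauge_le_one_iff h0, gauge_smul_of_nonneg (inv_pos.2 hp).le, smul_eq_mul,
        inv_mul_cancel₀ hp.ne']
    have := inner_le_supportFun hK.isCompact hmem (gradient (gauge K) x)
    rwa [inner_gradient, map_smul, fderiv_gauge_self hx, smul_eq_mul, inv_mul_cancel₀ hp.ne']
      at this

end IsConvexBody

/-- The first mixed volume of `K` and `L` (times the dimension), written as an integral over `K`
of the support function of `L` at the gradient of the gauge of `K`. -/
def mixedVol {m : ℕ} (K L : Set (Euc m)) : ℝ≥0∞ :=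
  ∫⁻ x in K, ENNReal.ofReal (supportFun L (gradient (gauge K) x))

namespace IsConvexBody
variable {m : ℕ} {K L N : Set (Euc m)}

lemma measurable_supportFun_gradient (hL : IsConvexBody L) (f : Euc m → ℝ) :
    Measurable fun x => supportFun L (gradient f x) :=
  (continuous_supportFun hL.isCompact
    (hL.interior_nonempty.mono interior_subset)).measurable.comp measurable_gradient

lemma nonempty (hL : IsConvexBody L) : L.Nonempty := hL.interior_nonempty.mono interior_subset

lemma mixedVol_add (hL : IsConvexBody L) (hN : IsConvexBody N) (hL0 : (0 : Euc m) ∈ L)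
    (hN0 : (0 : Euc m) ∈ N) : mixedVol K (L + N) = mixedVol K L + mixedVol K N := by
  rw [mixedVol, mixedVol, mixedVol,
    ← lintegral_add_left (hL.measurable_supportFun_gradient _).ennreal_ofReal]
  refine lintegral_congr fun x => ?_
  rw [supportFun_add hL.isCompact hL.nonempty hN.isCompact hN.nonempty,
    ENNReal.ofReal_add (supportFun_nonneg hL.isCompact hL0 _)
      (supportFun_nonneg hN.isCompact hN0 _)]

lemma mixedVol_smul (hL : IsConvexBody L) {c : ℝ} (hc : 0 ≤ c) :
    mixedVol K (c • L) = ENNReal.ofReal c * mixedVol K L := by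
  rw [mixedVol, mixedVol,
    ← lintegral_const_mul _ (hL.measurable_supportFun_gradient _).ennreal_ofReal]
  refine lintegral_congr fun x => ?_
  rw [supportFun_smul_left hL.isCompact hL.nonempty hc, ENNReal.ofReal_mul hc]

lemma ae_ne_zero (hm : m ≠ 0) : ∀ᵐ x : Euc m, x ≠ 0 := by
  have : Nonempty (Fin m) := ⟨⟨0, Nat.pos_of_ne_zero hm⟩⟩
  exact Measure.ae_ne volume 0

lemma mixedVol_self (hm : m ≠ 0) (hK : IsConvexBody K) (h0 : (0 : Euc m) ∈ interior K) :
    mixedVol K K = volume K := by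
  rw [mixedVol, ← setLIntegral_one]
  refine lintegral_congr_ae ?_
  filter_upwards [ae_restrict_of_ae (hK.ae_differentiableAt_gauge h0),
    ae_restrict_of_ae (ae_ne_zero hm)] with x hx hx0
  rw [hK.supportFun_gradient_gauge h0 hx hx0, ENNReal.ofReal_one]

lemma mixedVol_smul_self (hm : m ≠ 0) (hK : IsConvexBody K) (h0 : (0 : Euc m) ∈ interior K)
    {c : ℝ} (hc : 0 < c) :
    mixedVol (c • K) K = ENNReal.ofReal (c ^ (m - 1)) * volume K := by
  have h1 := mixedVol_self hm (hK.smul hc)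
    (by rw [interior_smul₀ hc.ne']; exact ⟨0, h0, smul_zero c⟩)
  rw [hK.mixedVol_smul hc.le, Measure.addHaar_smul, finrank_euclideanSpace, Fintype.card_fin,
    abs_of_pos (by positivity)] at h1
  obtain ⟨n, rfl⟩ := Nat.exists_eq_succ_of_ne_zero hm
  rw [pow_succ' c n, ENNReal.ofReal_mul hc.le, mul_assoc] at h1
  exact (ENNReal.mul_right_inj (by simpa using hc) ENNReal.ofReal_ne_top).1 h1

lemma exists_supportFun_gradient_le (hK : IsConvexBody K) (h0 : (0 : Euc m) ∈ interior K)
    (hL : IsConvexBody L) : ∃ H, 0 < H ∧ ∀ x, supportFun L (gradient (gauge K) x) ≤ H := by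
  obtain ⟨C, hC⟩ := hK.exists_lipschitzWith_gauge h0
  obtain ⟨D, hD⟩ := exists_lipschitzWith_supportFun hL.isCompact hL.nonempty
  refine ⟨D * C + 1, by positivity, fun x => ?_⟩
  have h1 := hD.dist_le_mul (gradient (gauge K) x) 0
  have h2 : ‖gradient (gauge K) x‖ ≤ C := by
    rw [gradient, LinearIsometryEquiv.norm_map]
    exact norm_fderiv_le_of_lipschitz ℝ hC
  have h3 : supportFun L (0 : Euc m) = 0 := by
    have := supportFun_smul_right hL.isCompact hL.nonempty le_rfl (0 : Euc m)
    simpa using this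
  rw [h3, Real.dist_eq, sub_zero, dist_zero_right] at h1
  have h4 : (D : ℝ) * ‖gradient (gauge K) x‖ ≤ D * C := by gcongr
  linarith [le_abs_self (supportFun L (gradient (gauge K) x))]

lemma mixedVol_ne_top (hK : IsConvexBody K) (h0 : (0 : Euc m) ∈ interior K)
    (hL : IsConvexBody L) : mixedVol K L ≠ ∞ := by
  obtain ⟨H, -, hH⟩ := hK.exists_supportFun_gradient_le h0 hL
  refine ne_top_of_le_ne_top ?_ (lintegral_mono fun x => ENNReal.ofReal_le_ofReal (hH x))
  rw [lintegral_const, Measure.restrict_apply_univ]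
  exact ENNReal.mul_ne_top ENNReal.ofReal_ne_top hK.volume_ne_top

/-- At points of differentiability the gauge of `K` is controlled on `s • K + ε • L`. -/
lemma gauge_sub_le_of_mem (hK : IsConvexBody K) (h0 : (0 : Euc m) ∈ interior K)
    (hL : IsConvexBody L) {s ε : ℝ} (hs : 0 < s) (hε : 0 ≤ ε) {x : Euc m}
    (hx : x ∈ s • K + ε • L) (hd : DifferentiableAt ℝ (gauge K) x) :
    gauge K x - ε * supportFun L (gradient (gauge K) x) ≤ s := by
  obtain ⟨y, hy, _, ⟨l, hl, rfl⟩, rfl⟩ := hx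
  set x := y + ε • l
  have h1 := (hK.convexOn_gauge h0).add_fderiv_le hd y
  have h2 : y - (y + ε • l) = -(ε • l) := by abel
  have h3 := inner_le_supportFun hL.isCompact hl (gradient (gauge K) x)
  rw [inner_gradient] at h3
  rw [h2, map_neg, map_smul, smul_eq_mul] at h1
  have h4 := (hK.gauge_le_iff h0 hs).2 hy
  nlinarith [mul_le_mul_of_nonneg_left h3 hε]

lemma lintegral_one_sub_pow (k : ℕ) :
    ∫⁻ t in Ioo (0 : ℝ) 1, ENNReal.ofReal ((1 - t) ^ k) = ENNReal.ofReal (1 / (k + 1)) := by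
  rw [← ofReal_integral_eq_lintegral_ofReal]
  · congr 1
    rw [← integral_Ioc_eq_integral_Ioo, ← intervalIntegral.integral_of_le zero_le_one,
      intervalIntegral.integral_comp_sub_left (fun t => t ^ k) 1]
    simp [integral_pow]
  · exact ((by fun_prop : Continuous fun t : ℝ => (1 - t) ^ k).integrableOn_Icc).mono_set
      Ioo_subset_Icc_self
  · filter_upwards [ae_restrict_mem measurableSet_Ioo] with t ht
    exact pow_nonneg (by linarith [ht.2]) _

lemma lintegral_one_sub_gauge (hK : IsConvexBody K) (h0 : (0 : Euc m) ∈ interior K) :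
    ∫⁻ x in K, ENNReal.ofReal (1 - gauge K x) =
      ENNReal.ofReal (1 / (m + 1)) * volume K := by
  rw [lintegral_eq_lintegral_meas_le]
  · rw [← lintegral_one_sub_pow, ← lintegral_mul_const' _ _ hK.volume_ne_top,
      ← Ioo_union_Ici_eq_Ioi (zero_lt_one (α := ℝ)), lintegral_union measurableSet_Ici]
    · have h1 : ∫⁻ t in Ici (1 : ℝ), (volume.restrict K) {x | t ≤ 1 - gauge K x} = 0 := by
        rw [setLIntegral_congr Ioi_ae_eq_Ici.symm]
        refine (setLIntegral_congr_fun (g := fun _ => 0) measurableSet_Ioi fun t ht => ?_).trans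
          lintegral_zero
        have : {x | t ≤ 1 - gauge K x} = ∅ :=
          eq_empty_of_forall_notMem fun x hx => by
            have h1 : t ≤ 1 - gauge K x := hx
            linarith [mem_Ioi.1 ht, gauge_nonneg (s := K) x]
        simp only [this, measure_empty]
      rw [h1, add_zero]
      refine setLIntegral_congr_fun measurableSet_Ioo fun t ht => ?_
      have h2 : {x | t ≤ 1 - gauge K x} = (1 - t) • K := by
        ext x
        rw [← hK.gauge_le_iff h0 (sub_pos.2 ht.2), mem_ofPred_eq]
        constructor <;> intro h <;> linarith
      have h3 : (1 - t) • K ∩ K = (1 - t) • K := by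
        refine inter_eq_left.2 fun x hx => ?_
        rw [← hK.gauge_le_iff h0 (sub_pos.2 ht.2)] at hx
        rw [← hK.gauge_le_one_iff h0]
        linarith [ht.1]
      simp only [h2]
      rw [Measure.restrict_apply (hK.smul (sub_pos.2 ht.2)).isCompact.measurableSet, h3,
        Measure.addHaar_smul, abs_of_nonneg (pow_nonneg (sub_pos.2 ht.2).le _)]
      simp
    · exact (Iio_disjoint_Ici le_rfl).mono_left Ioo_subset_Iio_self
  · filter_upwards [ae_restrict_mem hK.isCompact.measurableSet] with x hx
    exact sub_nonneg.2 ((hK.gauge_le_one_iff h0).2 hx)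
  · exact (continuous_const.sub (hK.continuous_gauge h0)).aemeasurable

end IsConvexBody

namespace IsConvexBody
variable {m : ℕ} {K L N : Set (Euc m)}

lemma pow_add_mul_le_add_pow (n : ℕ) {x y : ℝ} (hx : 0 ≤ x) (hy : 0 ≤ y) :
    x ^ n + n * x ^ (n - 1) * y ≤ (x + y) ^ n := by
  rcases hx.eq_or_lt with rfl | hx
  · rcases n with _ | _ | n <;> simp [hy]
  · have h := one_add_mul_le_pow (a := y / x) (by linarith [div_nonneg hy hx.le]) n
    rcases n with _ | n
    · simp
    calc x ^ (n + 1) + ((n + 1 : ℕ) : ℝ) * x ^ (n + 1 - 1) * y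
        = x ^ (n + 1) * (1 + ((n + 1 : ℕ) : ℝ) * (y / x)) := by
          rw [Nat.add_sub_cancel]; field_simp; ring
      _ ≤ x ^ (n + 1) * (1 + y / x) ^ (n + 1) := by gcongr
      _ = _ := by rw [← mul_pow]; congr 1; field_simp

lemma le_lintegral_perturbed (hm : m ≠ 0) (hK : IsConvexBody K) (h0 : (0 : Euc m) ∈ interior K)
    (hL : IsConvexBody L) {a b ε : ℝ} (ha : 0 < a) (hb : 0 < b)
    (hε : 0 < ε) (hvK : volume.real K = a ^ m) (hvL : volume.real L = b ^ m) :
    ENNReal.ofReal (1 / (m + 1)) * volume K + ENNReal.ofReal (ε * (a ^ (m - 1) * b)) ≤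
      ∫⁻ x, ENNReal.ofReal
        (max (1 - gauge K x + ε * supportFun L (gradient (gauge K) x)) 0) := by
  have hmeas : Measurable fun x => max (1 - gauge K x +
      ε * supportFun L (gradient (gauge K) x)) 0 := by
    have h1 := hL.measurable_supportFun_gradient (gauge K)
    have h2 := (hK.continuous_gauge h0).measurable
    fun_prop
  have hnn : 0 ≤ᵐ[volume] fun x => max (1 - gauge K x +
      ε * supportFun L (gradient (gauge K) x)) 0 :=
    Filter.Eventually.of_forall fun x => le_max_right _ _
  rw [lintegral_eq_lintegral_meas_le _ hnn hmeas.aemeasurable]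
  refine le_trans ?_ (lintegral_mono_set (fun t ht => ht.1 : Ioo (0 : ℝ) 1 ⊆ Ioi 0))
  have hvK' : volume K = ENNReal.ofReal (a ^ m) := by
    rw [← hvK, Measure.real, ENNReal.ofReal_toReal hK.volume_ne_top]
  have hlow : ∀ t ∈ Ioo (0 : ℝ) 1, ENNReal.ofReal ((1 - t) ^ m) * volume K +
      ENNReal.ofReal ((1 - t) ^ (m - 1)) * ENNReal.ofReal (m * (ε * (a ^ (m - 1) * b))) ≤
      volume {x | t ≤ max (1 - gauge K x + ε * supportFun L (gradient (gauge K) x)) 0} := by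
    intro t ht
    have ht1 : 0 < 1 - t := sub_pos.2 ht.2
    have hbm := hK.pow_le_volume_combo hL ha hb ht1 hε hvK hvL
    have h1 : volume ((1 - t) • K + ε • L) ≤
        volume {x | t ≤ max (1 - gauge K x + ε * supportFun L (gradient (gauge K) x)) 0} := by
      refine measure_mono_ae ?_
      filter_upwards [hK.ae_differentiableAt_gauge h0] with x hd hx
      have := hK.gauge_sub_le_of_mem h0 hL ht1 hε.le hx hd
      exact le_max_of_le_left (by linarith)
    refine le_trans ?_ h1
    rw [← ENNReal.ofReal_toReal ((hK.smul ht1).add (hL.smul hε)).volume_ne_top, hvK',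
      ← ENNReal.ofReal_mul (by positivity), ← ENNReal.ofReal_mul (by positivity),
      ← ENNReal.ofReal_add (by positivity) (by positivity)]
    refine ENNReal.ofReal_le_ofReal (le_trans ?_ hbm)
    obtain ⟨n, rfl⟩ := Nat.exists_eq_succ_of_ne_zero hm
    have hber := pow_add_mul_le_add_pow (n + 1) (mul_nonneg ht1.le ha.le) (mul_nonneg hε.le hb.le)
    refine le_trans (le_of_eq ?_) hber
    simp only [Nat.succ_eq_add_one, Nat.add_sub_cancel, mul_pow]
    push_cast
    ring
  refine le_trans ?_ (setLIntegral_mono' measurableSet_Ioo hlow)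
  rw [lintegral_add_left (by fun_prop), lintegral_mul_const' _ _ hK.volume_ne_top,
    lintegral_mul_const' _ _ ENNReal.ofReal_ne_top, lintegral_one_sub_pow, lintegral_one_sub_pow,
    ← ENNReal.ofReal_mul (by positivity)]
  refine add_le_add le_rfl (ENNReal.ofReal_le_ofReal (le_of_eq ?_))
  have : (m : ℝ) ≠ 0 := by exact_mod_cast hm
  rw [Nat.cast_sub (Nat.one_le_iff_ne_zero.2 hm), Nat.cast_one, sub_add_cancel]
  field_simp

lemma lintegral_perturbed_le (hK : IsConvexBody K) (h0 : (0 : Euc m) ∈ interior K)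
    (hL : IsConvexBody L) (hL0 : (0 : Euc m) ∈ L) {ε H : ℝ} (hε : 0 < ε) (hH : 0 < H)
    (hHle : ∀ x, supportFun L (gradient (gauge K) x) ≤ H) :
    ∫⁻ x, ENNReal.ofReal
        (max (1 - gauge K x + ε * supportFun L (gradient (gauge K) x)) 0) ≤
      ENNReal.ofReal (1 / (m + 1)) * volume K + ENNReal.ofReal ε * mixedVol K L +
        ENNReal.ofReal (ε * H) * volume ((1 + ε * H) • K \ K) := by
  have hs := hL.measurable_supportFun_gradient (gauge K)
  have hg := (hK.continuous_gauge h0).measurable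
  have hKm := hK.isCompact.measurableSet
  rw [← lintegral_add_compl _ hKm]
  refine add_le_add ?_ ?_
  · rw [← hK.lintegral_one_sub_gauge h0, mixedVol, ← lintegral_const_mul _ (by fun_prop),
      ← lintegral_add_left (by fun_prop)]
    refine setLIntegral_mono' hKm fun x hx => ?_
    have h1 := (hK.gauge_le_one_iff h0).2 hx
    have h2 := supportFun_nonneg hL.isCompact hL0 (gradient (gauge K) x)
    rw [← ENNReal.ofReal_mul hε.le, ← ENNReal.ofReal_add (by linarith) (by positivity),
      max_eq_left (by nlinarith)]
  · have hp : 0 < 1 + ε * H := by positivity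
    calc ∫⁻ x in Kᶜ, ENNReal.ofReal
          (max (1 - gauge K x + ε * supportFun L (gradient (gauge K) x)) 0)
        ≤ ∫⁻ x in Kᶜ, ((1 + ε * H) • K).indicator (fun _ => ENNReal.ofReal (ε * H)) x := by
          refine setLIntegral_mono' hKm.compl fun x hx => ?_
          rw [mem_compl_iff, ← hK.gauge_le_one_iff h0, not_le] at hx
          have h1 : ε * supportFun L (gradient (gauge K) x) ≤ ε * H :=
            mul_le_mul_of_nonneg_left (hHle x) hε.le
          by_cases hx2 : x ∈ (1 + ε * H) • K
          · rw [indicator_of_mem hx2]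
            exact ENNReal.ofReal_le_ofReal (max_le (by linarith) (by positivity))
          · rw [indicator_of_notMem hx2]
            rw [← hK.gauge_le_iff h0 hp, not_le] at hx2
            rw [max_eq_right (by linarith), ENNReal.ofReal_zero]
      _ = _ := by
          have hm2 := (hK.smul hp).isCompact.measurableSet
          rw [lintegral_indicator hm2, lintegral_const, Measure.restrict_restrict hm2,
            Measure.restrict_apply_univ, sdiff_eq]

/-- Minkowski's first inequality. -/
theorem le_mixedVol (hm : m ≠ 0) (hK : IsConvexBody K) (h0 : (0 : Euc m) ∈ interior K)
    (hL : IsConvexBody L) (hL0 : (0 : Euc m) ∈ L) {a b : ℝ} (ha : 0 < a) (hb : 0 < b)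
    (hvK : volume.real K = a ^ m) (hvL : volume.real L = b ^ m) :
    a ^ (m - 1) * b ≤ (mixedVol K L).toReal := by
  obtain ⟨H, hH, hHle⟩ := hK.exists_supportFun_gradient_le h0 hL
  have key : ∀ ε : ℝ, 0 < ε → a ^ (m - 1) * b ≤
      (mixedVol K L).toReal + H * (((1 + ε * H) ^ m - 1) * a ^ m) := by
    intro ε hε
    have hp : 0 < 1 + ε * H := by positivity
    have h1 := (hK.le_lintegral_perturbed hm h0 hL ha hb hε hvK hvL).trans
      (hK.lintegral_perturbed_le h0 hL hL0 hε hH hHle)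
    rw [add_assoc, ENNReal.add_le_add_iff_left
      (ENNReal.mul_ne_top ENNReal.ofReal_ne_top hK.volume_ne_top)] at h1
    have hsub : K ⊆ (1 + ε * H) • K := fun x hx => by
      rw [← hK.gauge_le_iff h0 hp]
      linarith [(hK.gauge_le_one_iff h0).2 hx, mul_pos hε hH]
    have hfin := ((hK.smul hp)).volume_ne_top
    have h2 := ENNReal.toReal_mono (ENNReal.add_ne_top.2
      ⟨ENNReal.mul_ne_top ENNReal.ofReal_ne_top (hK.mixedVol_ne_top h0 hL),
        ENNReal.mul_ne_top ENNReal.ofReal_ne_top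
          (ne_top_of_le_ne_top hfin (measure_mono sdiff_subset))⟩) h1
    rw [ENNReal.toReal_add (ENNReal.mul_ne_top ENNReal.ofReal_ne_top (hK.mixedVol_ne_top h0 hL))
      (ENNReal.mul_ne_top ENNReal.ofReal_ne_top
          (ne_top_of_le_ne_top hfin (measure_mono sdiff_subset))), ENNReal.toReal_mul,
      ENNReal.toReal_mul, ENNReal.toReal_ofReal (by positivity), ENNReal.toReal_ofReal hε.le,
      ENNReal.toReal_ofReal (by positivity), measure_sdiff hsub hK.isCompact.nullMeasurableSet
        hK.volume_ne_top, ENNReal.toReal_sub_of_le (measure_mono hsub) hfin,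
      Measure.addHaar_smul, ENNReal.toReal_mul, ENNReal.toReal_ofReal (abs_nonneg _),
      abs_of_pos (by positivity), finrank_euclideanSpace, Fintype.card_fin] at h2
    change _ ≤ _ + _ * (_ * volume.real K - volume.real K) at h2
    rw [hvK] at h2
    have h3 : ε * (a ^ (m - 1) * b) ≤ ε * ((mixedVol K L).toReal +
        H * (((1 + ε * H) ^ m - 1) * a ^ m)) := h2.trans_eq (by ring)
    exact le_of_mul_le_mul_left h3 hε
  have hcont : Continuous fun ε : ℝ => (mixedVol K L).toReal +
      H * (((1 + ε * H) ^ m - 1) * a ^ m) := by fun_prop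
  have hlim := (hcont.tendsto 0).mono_left (nhdsWithin_le_nhds (s := Ioi 0))
  refine ge_of_tendsto (by simpa using hlim) ?_
  filter_upwards [self_mem_nhdsWithin] with ε hε using key ε hε

/-- The equality case of Minkowski's first inequality. -/
theorem exists_eq_vadd_smul_of_mixedVol_eq (hm : m ≠ 0) (hK : IsConvexBody K)
    (h0 : (0 : Euc m) ∈ interior K) (hL : IsConvexBody L) (hL0 : (0 : Euc m) ∈ L) {a b : ℝ}
    (ha : 0 < a) (hb : 0 < b) (hvK : volume.real K = a ^ m) (hvL : volume.real L = b ^ m)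
    (heq : (mixedVol K L).toReal ≤ a ^ (m - 1) * b) :
    ∃ (c : ℝ) (v : Euc m), 0 < c ∧ L = v +ᵥ c • K := by
  have hr : 0 < a / b := by positivity
  have hL' := hL.smul hr
  have hK0 := zero_mem h0
  have hL0' : (0 : Euc m) ∈ (a / b) • L := ⟨0, hL0, smul_zero _⟩
  have hvL' : volume.real ((a / b) • L) = volume.real K := by
    rw [Measure.real, Measure.addHaar_smul, ENNReal.toReal_mul, ENNReal.toReal_ofReal
      (abs_nonneg _), abs_of_pos (by positivity), finrank_euclideanSpace, Fintype.card_fin]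
    change _ * volume.real L = _
    rw [hvL, hvK, div_pow, div_mul_cancel₀ _ (by positivity)]
  have hKL := hK.add hL'
  set d := (volume.real (K + (a / b) • L)) ^ ((m : ℝ)⁻¹) with hd
  have hdm : volume.real (K + (a / b) • L) = d ^ m := by
    rw [hd, Real.rpow_inv_natCast_pow measureReal_nonneg hm]
  have hdpos : 0 < d := Real.rpow_pos_of_pos hKL.volume_pos _
  have h1 := hK.le_mixedVol hm h0 hKL ⟨0, hK0, 0, hL0', add_zero 0⟩ ha hdpos hvK hdm
  have ham : a ^ m = a ^ (m - 1) * a := by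
    rw [← pow_succ, Nat.sub_add_cancel (Nat.one_le_iff_ne_zero.2 hm)]
  rw [hK.mixedVol_add hL' hK0 hL0', mixedVol_self hm hK h0, hL.mixedVol_smul hr.le,
    ENNReal.toReal_add hK.volume_ne_top
      (ENNReal.mul_ne_top ENNReal.ofReal_ne_top (hK.mixedVol_ne_top h0 hL)), ENNReal.toReal_mul,
    ENNReal.toReal_ofReal hr.le] at h1
  change _ ≤ volume.real K + _ at h1
  have h2 : a / b * (mixedVol K L).toReal ≤ a ^ (m - 1) * a := by
    calc _ ≤ a / b * (a ^ (m - 1) * b) := by gcongr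
      _ = _ := by field_simp
  have h3 : d ≤ 2 * a := by
    refine le_of_mul_le_mul_left ?_ (pow_pos ha (m - 1))
    rw [hvK, ham] at h1
    linarith
  obtain ⟨v, hv⟩ := exists_vadd_of_volume_add_le hm hK hL' hvL' (by
    rw [hdm, hvK, ← mul_pow]
    exact pow_le_pow_left₀ hdpos.le h3 m)
  refine ⟨(a / b)⁻¹, (a / b)⁻¹ • v, inv_pos.2 hr, ?_⟩
  rw [← smul_vadd_set_eq, ← hv, inv_smul_smul₀ hr.ne']

end IsConvexBody

/-- A set invariant under multiplication by positive scalars. -/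
def IsPosCone {m : ℕ} (Ω : Set (Euc m)) : Prop := ∀ ⦃c : ℝ⦄, 0 < c → ∀ ⦃x⦄, x ∈ Ω → c • x ∈ Ω

lemma lintegral_Ioc_pow (k : ℕ) :
    ∫⁻ t in Ioc (0 : ℝ) 1, ENNReal.ofReal (t ^ k) = ENNReal.ofReal (1 / (k + 1)) := by
  rw [← ofReal_integral_eq_lintegral_ofReal]
  · congr 1
    rw [← intervalIntegral.integral_of_le zero_le_one]
    simp [integral_pow]
  · exact ((by fun_prop : Continuous fun t : ℝ => t ^ k).integrableOn_Icc).mono_set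
      Ioc_subset_Icc_self
  · filter_upwards [ae_restrict_mem measurableSet_Ioc] with t ht
    exact pow_nonneg ht.1.le _

lemma isometry_cons_one (n : ℕ) :
    Isometry fun y : Euc n => (WithLp.toLp 2 (Fin.cons 1 y.ofLp) : Euc (n + 1)) := by
  refine Isometry.of_dist_eq fun x y => ?_
  rw [EuclideanSpace.dist_eq, EuclideanSpace.dist_eq, Fin.sum_univ_succ]
  simp

lemma volume_preimage_toLp {n : ℕ} (S : Set (Euc n)) :
    volume (WithLp.toLp 2 ⁻¹' S) = volume S :=
  (EuclideanSpace.volume_preserving_symm_measurableEquiv_toLp (Fin n)).symm.measure_preimage_equiv S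

lemma exists_volume_cone_fst (n : ℕ) : ∃ κ : ℝ≥0∞, κ ≠ 0 ∧ κ ≠ ∞ ∧ ∀ Ω : Set (Euc (n + 1)),
    MeasurableSet Ω → IsPosCone Ω → (∀ x ∈ Ω, 0 < x 0) →
      volume (Ω ∩ {x | x 0 ≤ 1}) = κ * μH[n] (Ω ∩ {x | x 0 = 1}) := by
  have hH : (μH[(n : ℝ)] : Measure (Euc n)).IsAddHaarMeasure := by
    have := isAddHaarMeasure_hausdorffMeasure (E := Euc n)
    rwa [finrank_euclideanSpace, Fintype.card_fin] at this
  obtain ⟨c, hc0, hct, hc⟩ : ∃ c : ℝ≥0∞, c ≠ 0 ∧ c ≠ ∞ ∧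
      (volume : Measure (Euc n)) = c • μH[(n : ℝ)] := by
    refine ⟨Measure.addHaarScalarFactor volume (μH[(n : ℝ)] : Measure (Euc n)), ?_,
      ENNReal.coe_ne_top, Measure.isAddLeftInvariant_eq_smul _ _⟩
    exact ENNReal.coe_ne_zero.2 (Measure.addHaarScalarFactor_pos_of_isAddHaarMeasure _ _).ne'
  refine ⟨ENNReal.ofReal (1 / (n + 1)) * c, ?_, ?_, fun Ω hΩ hcone hpos => ?_⟩
  · refine mul_ne_zero ?_ hc0
    rw [ne_eq, ENNReal.ofReal_eq_zero, not_le]; positivity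
  · exact ENNReal.mul_ne_top ENNReal.ofReal_ne_top hct
  set A : Set (Fin (n + 1) → ℝ) := WithLp.toLp 2 ⁻¹' Ω with hA
  have hAm : MeasurableSet A := (MeasurableEquiv.toLp 2 (Fin (n + 1) → ℝ)).measurable hΩ
  have hslice : ∀ t : ℝ, 0 < t → slice A t = t • slice A 1 := by
    intro t ht
    ext z
    rw [mem_smul_set_iff_inv_smul_mem₀ ht.ne']
    have key : ∀ (c s : ℝ) (z : Fin n → ℝ),
        (WithLp.toLp 2 (Fin.cons (c * s) (c • z) : Fin (n + 1) → ℝ) : Euc (n + 1)) =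
        c • WithLp.toLp 2 (Fin.cons s z) := by
      intro c s z
      ext i
      refine Fin.cases ?_ (fun j => ?_) i <;> simp
    constructor
    · intro hz
      have h1 := hcone (inv_pos.2 ht) (x := WithLp.toLp 2 (Fin.cons t z)) hz
      rwa [← key, inv_mul_cancel₀ ht.ne'] at h1
    · intro hz
      have h1 := hcone ht (x := WithLp.toLp 2 (Fin.cons 1 (t⁻¹ • z))) hz
      rwa [← key, mul_one, smul_inv_smul₀ ht.ne'] at h1
  have h1 : volume (Ω ∩ {x | x 0 ≤ 1}) = ENNReal.ofReal (1 / (n + 1)) * volume (slice A 1) := by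
    have h2 : WithLp.toLp 2 ⁻¹' (Ω ∩ {x : Euc (n + 1) | x 0 ≤ 1}) =
        A ∩ {x : Fin (n + 1) → ℝ | x 0 ∈ Ioc (0 : ℝ) 1} := by
      ext x
      exact ⟨fun h => ⟨h.1, hpos _ h.1, h.2⟩, fun h => ⟨h.1, h.2.2⟩⟩
    rw [← volume_preimage_toLp, h2, volume_inter_fst hAm measurableSet_Ioc,
      ← lintegral_Ioc_pow, ← lintegral_mul_const _ (by fun_prop)]
    refine setLIntegral_congr_fun measurableSet_Ioc fun t ht => ?_
    simp only [hslice t ht.1]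
    rw [Measure.addHaar_smul, abs_of_nonneg (pow_nonneg ht.1.le _)]
    simp
  have h3 : Ω ∩ {x | x 0 = 1} =
      (fun y : Euc n => (WithLp.toLp 2 (Fin.cons 1 y.ofLp) : Euc (n + 1))) ''
        (WithLp.ofLp ⁻¹' slice A 1) := by
    ext x
    constructor
    · rintro ⟨hx, hx1⟩
      have h4 : (Fin.cons 1 (Fin.tail x.ofLp) : Fin (n + 1) → ℝ) = x.ofLp := by
        have h5 : x.ofLp 0 = 1 := hx1
        conv_rhs => rw [← Fin.cons_self_tail x.ofLp, h5]
      refine ⟨WithLp.toLp 2 (Fin.tail x.ofLp), ?_, ?_⟩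
      · change WithLp.toLp 2 (Fin.cons 1 (Fin.tail x.ofLp)) ∈ Ω
        rw [h4]; exact hx
      · simp only [h4]
    · rintro ⟨y, hy, rfl⟩
      exact ⟨hy, rfl⟩
  rw [h1, h3, (isometry_cons_one n).hausdorffMeasure_image (Or.inl n.cast_nonneg), mul_assoc]
  congr 1
  rw [← smul_eq_mul, ← Measure.smul_apply, ← hc, ← volume_preimage_toLp]
  rfl

/-- The volume of the part of a cone below a hyperplane is proportional to the
area of its section. -/
lemma exists_volume_cone (n : ℕ) : ∃ κ : ℝ≥0∞, κ ≠ 0 ∧ κ ≠ ∞ ∧ ∀ (a : Euc (n + 1))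
    (Ω : Set (Euc (n + 1))), MeasurableSet Ω → IsPosCone Ω → (∀ x ∈ Ω, 0 < ⟪a, x⟫) →
      ENNReal.ofReal ‖a‖ * volume (Ω ∩ {x | ⟪a, x⟫ ≤ 1}) =
        κ * μH[n] (Ω ∩ {x | ⟪a, x⟫ = 1}) := by
  obtain ⟨κ, hκ0, hκt, hκ⟩ := exists_volume_cone_fst n
  refine ⟨κ, hκ0, hκt, fun a Ω hΩ hcone hpos => ?_⟩
  rcases eq_or_ne a 0 with rfl | ha
  · have : Ω = ∅ := eq_empty_of_forall_notMem fun x hx => by simpa using hpos x hx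
    simp [this]
  have hr : 0 < ‖a‖ := norm_pos_iff.2 ha
  set e : Euc (n + 1) := EuclideanSpace.single 0 (‖a‖) with he
  have hne : ‖e‖ = ‖a‖ := by simp [he]
  obtain ⟨ρ, hρ⟩ : ∃ ρ : Euc (n + 1) ≃ₗᵢ[ℝ] Euc (n + 1), ρ e = a :=
    ⟨_, Submodule.reflection_sub hne⟩
  set Ω' : Set (Euc (n + 1)) := ρ ⁻¹' Ω with hΩ'
  have hin : ∀ x, ⟪a, ρ x⟫ = ‖a‖ * x 0 := by
    intro x
    rw [← hρ, ρ.inner_map_map, he, EuclideanSpace.inner_single_left]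
    simp
  have hm' : MeasurableSet Ω' := ρ.continuous.measurable hΩ
  have hc' : IsPosCone Ω' := fun c hc x hx => by
    change ρ (c • x) ∈ Ω
    rw [map_smul]
    exact hcone hc hx
  have hp' : ∀ x ∈ Ω', 0 < x 0 := fun x hx => by
    have := hpos _ hx
    rw [hin] at this
    exact pos_of_mul_pos_right this hr.le
  have key := hκ Ω' hm' hc' hp'
  have hsc : ∀ T : Set ℝ, Ω ∩ {x | ⟪a, x⟫ ∈ T} =
      ρ '' (‖a‖⁻¹ • (Ω' ∩ {x : Euc (n + 1) | x 0 ∈ T})) := by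
    intro T
    ext x
    constructor
    · rintro ⟨hx, hT⟩
      refine ⟨ρ.symm x, ?_, ρ.apply_symm_apply x⟩
      rw [mem_smul_set_iff_inv_smul_mem₀ (inv_pos.2 hr).ne', inv_inv]
      refine ⟨?_, ?_⟩
      · change ρ (‖a‖ • ρ.symm x) ∈ Ω
        rw [map_smul, ρ.apply_symm_apply]
        exact hcone hr hx
      · have h1 := hin (ρ.symm x)
        rw [ρ.apply_symm_apply] at h1
        change ‖a‖ * (ρ.symm x) 0 ∈ T
        rw [← h1]; exact hT
    · rintro ⟨_, ⟨y, ⟨hy, hT⟩, rfl⟩, rfl⟩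
      refine ⟨?_, ?_⟩
      · simp only [map_smul]
        exact hcone (inv_pos.2 hr) hy
      · change ⟪a, ρ (‖a‖⁻¹ • y)⟫ ∈ T
        rw [map_smul, inner_smul_right, hin, inv_mul_cancel_left₀ hr.ne']
        exact hT
  have h1 := hsc (Iic 1)
  have h2 := hsc {1}
  simp only [mem_Iic, mem_singleton_iff] at h1 h2
  have hvol : ∀ S : Set (Euc (n + 1)), volume (ρ '' S) = volume S := fun S => by
    have h3 : ρ '' S = ρ.symm ⁻¹' S := ρ.toEquiv.image_eq_preimage_symm S
    rw [h3, ρ.symm.measurePreserving.measure_preimage_emb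
      ρ.symm.toHomeomorph.measurableEmbedding]
  rw [h1, h2, hvol, ρ.isometry.hausdorffMeasure_image (Or.inl n.cast_nonneg),
    Measure.addHaar_smul, Measure.hausdorffMeasure_smul₀ n.cast_nonneg (inv_pos.2 hr).ne', key,
    abs_of_pos (by positivity), finrank_euclideanSpace, Fintype.card_fin, ← mul_assoc,
    ← ENNReal.ofReal_mul hr.le, ENNReal.smul_def, smul_eq_mul]
  have h4 : ENNReal.ofReal (‖a‖ * ‖a‖⁻¹ ^ (n + 1)) =
      ((‖(‖a‖⁻¹ : ℝ)‖₊ ^ (n : ℝ) : NNReal) : ℝ≥0∞) := by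
    rw [ENNReal.ofReal, NNReal.rpow_natCast]
    congr 1
    ext
    rw [Real.coe_toNNReal _ (by positivity)]
    simp [pow_succ]
    field_simp
  rw [h4]
  ring

/-- The radial projection onto the boundary of `K`. -/
def radialProj {m : ℕ} (K : Set (Euc m)) (x : Euc m) : Euc m := (gauge K x)⁻¹ • x

/-- The open cone spanned by a subset of the boundary of `K`. -/
def coneOver {m : ℕ} (K E : Set (Euc m)) : Set (Euc m) := {x | x ≠ 0 ∧ radialProj K x ∈ E}

/-- Central projection to the hyperplane `⟪a, x⟫ = 1`. -/
def centralProj {m : ℕ} (a x : Euc m) : Euc m := ⟪a, x⟫⁻¹ • x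

lemma radialProj_smul {m : ℕ} (K : Set (Euc m)) {c : ℝ} (hc : 0 < c) (x : Euc m) :
    radialProj K (c • x) = radialProj K x := by
  rw [radialProj, radialProj, gauge_smul_of_nonneg hc.le, smul_smul, smul_eq_mul, mul_inv,
    mul_right_comm, inv_mul_cancel₀ hc.ne', one_mul]

lemma isPosCone_coneOver {m : ℕ} (K E : Set (Euc m)) : IsPosCone (coneOver K E) := by
  rintro c hc x ⟨hx0, hx⟩
  exact ⟨smul_ne_zero hc.ne' hx0, by rwa [radialProj_smul K hc]⟩

lemma radialProj_of_gauge_eq_one {m : ℕ} {K : Set (Euc m)} {x : Euc m} (hx : gauge K x = 1) :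
    radialProj K x = x := by rw [radialProj, hx, inv_one, one_smul]

namespace IsConvexBody
variable {m n : ℕ}

lemma measurable_radialProj {K : Set (Euc m)} (hK : IsConvexBody K)
    (h0 : (0 : Euc m) ∈ interior K) : Measurable (radialProj K) := by
  have := (hK.continuous_gauge h0).measurable
  unfold radialProj
  fun_prop

lemma measurableSet_coneOver {K : Set (Euc m)} (hK : IsConvexBody K)
    (h0 : (0 : Euc m) ∈ interior K) {E : Set (Euc m)} (hE : MeasurableSet E) :
    MeasurableSet (coneOver K E) :=
  (measurableSet_singleton (0 : Euc m)).compl.inter (hK.measurable_radialProj h0 hE)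

lemma gauge_smul_radialProj {K : Set (Euc m)} (hK : IsConvexBody K)
    (h0 : (0 : Euc m) ∈ interior K) {x : Euc m} (hx : x ≠ 0) :
    gauge K x • radialProj K x = x := by
  rw [radialProj, smul_inv_smul₀ (hK.gauge_pos h0 hx).ne']

lemma inner_eq_gauge_mul {K : Set (Euc m)} (hK : IsConvexBody K)
    (h0 : (0 : Euc m) ∈ interior K) {x : Euc m} (hx : x ≠ 0) (a : Euc m) :
    ⟪a, x⟫ = gauge K x * ⟪a, radialProj K x⟫ := by
  rw [← inner_smul_right, hK.gauge_smul_radialProj h0 hx]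

lemma coneOver_inter_eq_image {K : Set (Euc m)} (hK : IsConvexBody K)
    (h0 : (0 : Euc m) ∈ interior K) {E : Set (Euc m)} (hE1 : ∀ x ∈ E, gauge K x = 1) {a : Euc m}
    (hpos : ∀ x ∈ E, 0 < ⟪a, x⟫) :
    coneOver K E ∩ {x | ⟪a, x⟫ = 1} = centralProj a '' E := by
  ext x
  constructor
  · rintro ⟨⟨hx0, hxE⟩, hx1⟩
    refine ⟨_, hxE, ?_⟩
    have h1 : ⟪a, x⟫ = 1 := hx1
    have h2 := hK.inner_eq_gauge_mul h0 hx0 a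
    rw [h1] at h2
    rw [centralProj, inv_eq_of_mul_eq_one_left h2.symm,
      hK.gauge_smul_radialProj h0 hx0]
  · rintro ⟨y, hy, rfl⟩
    have hp := hpos y hy
    have h1 : ⟪a, centralProj a y⟫ = 1 := by
      rw [centralProj, inner_smul_right, inv_mul_cancel₀ hp.ne']
    refine ⟨⟨fun h => by simp [h] at h1, ?_⟩, h1⟩
    rwa [centralProj, radialProj_smul K (inv_pos.2 hp), radialProj_of_gauge_eq_one (hE1 y hy)]

lemma inner_pos_of_mem_coneOver {K : Set (Euc m)} (hK : IsConvexBody K)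
    (h0 : (0 : Euc m) ∈ interior K) {E : Set (Euc m)} {a : Euc m}
    (hpos : ∀ x ∈ E, 0 < ⟪a, x⟫) : ∀ x ∈ coneOver K E, 0 < ⟪a, x⟫ := by
  rintro x ⟨hx0, hxE⟩
  rw [hK.inner_eq_gauge_mul h0 hx0 a]
  exact mul_pos (hK.gauge_pos h0 hx0) (hpos _ hxE)

/-- The constant relating volumes of truncated cones and areas of their sections. -/
def IsConeConst (n : ℕ) (κ : ℝ≥0∞) : Prop := ∀ (a : Euc (n + 1))
    (Ω : Set (Euc (n + 1))), MeasurableSet Ω → IsPosCone Ω → (∀ x ∈ Ω, 0 < ⟪a, x⟫) →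
      ENNReal.ofReal ‖a‖ * volume (Ω ∩ {x | ⟪a, x⟫ ≤ 1}) =
        κ * μH[n] (Ω ∩ {x | ⟪a, x⟫ = 1})

variable {K E : Set (Euc (n + 1))} {κ : ℝ≥0∞}

lemma hausdorffMeasure_le_cone (hK : IsConvexBody K) (h0 : 0 ∈ interior K)
    (hκ : IsConeConst n κ) (hE : MeasurableSet E) (hE1 : ∀ x ∈ E, gauge K x = 1)
    {a : Euc (n + 1)} {α : ℝ} (hα : 0 < α) (hαE : ∀ x ∈ E, α ≤ ⟪a, x⟫) {C : NNReal}
    (hC : ∀ x ∈ E, ∀ y ∈ E, dist x y ≤ C * dist (centralProj a x) (centralProj a y)) :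
    κ * μH[n] E ≤ C ^ n * (ENNReal.ofReal (α⁻¹ ^ (n + 1)) *
      (ENNReal.ofReal ‖a‖ * volume (K ∩ coneOver K E))) := by
  have hpos : ∀ x ∈ E, 0 < ⟪a, x⟫ := fun x hx => hα.trans_le (hαE x hx)
  have h1 := hκ a (coneOver K E) (hK.measurableSet_coneOver h0 hE) (isPosCone_coneOver K E)
    (hK.inner_pos_of_mem_coneOver h0 hpos)
  rw [hK.coneOver_inter_eq_image h0 hE1 hpos] at h1
  have h2 : radialProj K '' (centralProj a '' E) = E := by
    rw [image_image]
    refine (image_congr fun x hx => ?_).trans (image_id E)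
    rw [centralProj, radialProj_smul K (inv_pos.2 (hpos x hx)),
      radialProj_of_gauge_eq_one (hE1 x hx), id]
  have h3 : LipschitzOnWith C (radialProj K) (centralProj a '' E) := by
    refine LipschitzOnWith.of_dist_le_mul ?_
    rintro _ ⟨x, hx, rfl⟩ _ ⟨y, hy, rfl⟩
    have h4 : ∀ z ∈ E, radialProj K (centralProj a z) = z := fun z hz => by
      rw [centralProj, radialProj_smul K (inv_pos.2 (hpos z hz)),
        radialProj_of_gauge_eq_one (hE1 z hz)]
    rw [h4 x hx, h4 y hy]
    exact hC x hx y hy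
  have h4 := h3.hausdorffMeasure_image_le (d := n) n.cast_nonneg
  rw [h2, ENNReal.rpow_natCast] at h4
  have h5 : volume (coneOver K E ∩ {x | ⟪a, x⟫ ≤ 1}) ≤
      ENNReal.ofReal (α⁻¹ ^ (n + 1)) * volume (K ∩ coneOver K E) := by
    have h6 : coneOver K E ∩ {x | ⟪a, x⟫ ≤ 1} ⊆ α⁻¹ • (K ∩ coneOver K E) := by
      rintro x ⟨hx, hx1⟩
      rw [mem_smul_set_iff_inv_smul_mem₀ (inv_pos.2 hα).ne', inv_inv]
      refine ⟨?_, isPosCone_coneOver K E hα hx⟩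
      rw [← hK.gauge_le_one_iff h0, gauge_smul_of_nonneg hα.le, smul_eq_mul]
      have h7 := hK.inner_eq_gauge_mul h0 hx.1 a
      have h8 : ⟪a, x⟫ ≤ 1 := hx1
      nlinarith [hαE _ hx.2, gauge_nonneg (s := K) x]
    refine (measure_mono h6).trans_eq ?_
    rw [Measure.addHaar_smul, abs_of_pos (by positivity), finrank_euclideanSpace,
      Fintype.card_fin]
  calc κ * μH[n] E ≤ κ * (C ^ n * μH[n] (centralProj a '' E)) := by gcongr
    _ = C ^ n * (κ * μH[n] (centralProj a '' E)) := by ring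
    _ = C ^ n * (ENNReal.ofReal ‖a‖ * volume (coneOver K E ∩ {x | ⟪a, x⟫ ≤ 1})) := by rw [h1]
    _ ≤ C ^ n * (ENNReal.ofReal ‖a‖ * (ENNReal.ofReal (α⁻¹ ^ (n + 1)) *
        volume (K ∩ coneOver K E))) := by gcongr
    _ = _ := by ring

lemma cone_le_hausdorffMeasure (hK : IsConvexBody K) (h0 : 0 ∈ interior K)
    (hκ : IsConeConst n κ) (hE : MeasurableSet E) (hE1 : ∀ x ∈ E, gauge K x = 1)
    {a : Euc (n + 1)} (hpos : ∀ x ∈ E, 0 < ⟪a, x⟫) {β : ℝ} (hβ : 0 < β)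
    (hβE : ∀ x ∈ E, ⟪a, x⟫ ≤ β) {C : NNReal}
    (hC : ∀ x ∈ E, ∀ y ∈ E, dist (centralProj a x) (centralProj a y) ≤ C * dist x y) :
    ENNReal.ofReal ‖a‖ * volume (K ∩ coneOver K E) ≤
      C ^ n * (ENNReal.ofReal (β ^ (n + 1)) * (κ * μH[n] E)) := by
  have h1 := hκ a (coneOver K E) (hK.measurableSet_coneOver h0 hE) (isPosCone_coneOver K E)
    (hK.inner_pos_of_mem_coneOver h0 hpos)
  rw [hK.coneOver_inter_eq_image h0 hE1 hpos] at h1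
  have h4 := (LipschitzOnWith.of_dist_le_mul hC).hausdorffMeasure_image_le (d := n) n.cast_nonneg
  rw [ENNReal.rpow_natCast] at h4
  have h5 : volume (K ∩ coneOver K E) ≤
      ENNReal.ofReal (β ^ (n + 1)) * volume (coneOver K E ∩ {x | ⟪a, x⟫ ≤ 1}) := by
    have h6 : K ∩ coneOver K E ⊆ β • (coneOver K E ∩ {x | ⟪a, x⟫ ≤ 1}) := by
      rintro x ⟨hxK, hx⟩
      rw [mem_smul_set_iff_inv_smul_mem₀ hβ.ne']
      refine ⟨isPosCone_coneOver K E (inv_pos.2 hβ) hx, ?_⟩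
      change ⟪a, β⁻¹ • x⟫ ≤ 1
      rw [inner_smul_right, inv_mul_le_iff₀ hβ, mul_one, hK.inner_eq_gauge_mul h0 hx.1 a]
      have h7 := (hK.gauge_le_one_iff h0).2 hxK
      nlinarith [hβE _ hx.2, hpos _ hx.2, gauge_nonneg (s := K) x]
    refine (measure_mono h6).trans_eq ?_
    rw [Measure.addHaar_smul, abs_of_pos (by positivity), finrank_euclideanSpace,
      Fintype.card_fin]
  calc ENNReal.ofReal ‖a‖ * volume (K ∩ coneOver K E)
      ≤ ENNReal.ofReal ‖a‖ * (ENNReal.ofReal (β ^ (n + 1)) *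
          volume (coneOver K E ∩ {x | ⟪a, x⟫ ≤ 1})) := by gcongr
    _ = ENNReal.ofReal (β ^ (n + 1)) * (ENNReal.ofReal ‖a‖ *
          volume (coneOver K E ∩ {x | ⟪a, x⟫ ≤ 1})) := by ring
    _ = ENNReal.ofReal (β ^ (n + 1)) * (κ * μH[n] (centralProj a '' E)) := by rw [h1]
    _ ≤ ENNReal.ofReal (β ^ (n + 1)) * (κ * (C ^ n * μH[n] E)) := by gcongr
    _ = _ := by ring

end IsConvexBody

lemma dist_centralProj {m : ℕ} {a x y : Euc m} (hx : 0 < ⟪a, x⟫) (hy : 0 < ⟪a, y⟫) :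
    ⟪a, x⟫ * ⟪a, y⟫ * dist (centralProj a x) (centralProj a y) =
      ‖⟪a, y⟫ • (x - y) - ⟪a, x - y⟫ • y‖ := by
  rw [dist_eq_norm, ← abs_of_pos (mul_pos hx hy), ← Real.norm_eq_abs, ← norm_smul]
  congr 1
  rw [centralProj, centralProj, smul_sub, smul_smul, smul_smul, inner_sub_right,
    show ⟪a, x⟫ * ⟪a, y⟫ * ⟪a, x⟫⁻¹ = ⟪a, y⟫ by field_simp,
    show ⟪a, x⟫ * ⟪a, y⟫ * ⟪a, y⟫⁻¹ = ⟪a, x⟫ by field_simp]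
  module

section
variable {m : ℕ} {a x y : Euc m} {τ : ℝ}

lemma dist_centralProj_le (hτ : τ < 1) (hx : |⟪a, x⟫ - 1| ≤ τ)
    (hy : |⟪a, y⟫ - 1| ≤ τ) (hxy : |⟪a, x - y⟫| * ‖y‖ ≤ τ * ‖x - y‖) :
    dist (centralProj a x) (centralProj a y) ≤ (1 + 2 * τ) / (1 - τ) ^ 2 * dist x y := by
  rw [abs_le] at hx hy
  have hx0 : 1 - τ ≤ ⟪a, x⟫ := by linarith
  have hy0 : 1 - τ ≤ ⟪a, y⟫ := by linarith
  have h1 : 0 < 1 - τ := by linarith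
  have h := dist_centralProj (h1.trans_le hx0) (h1.trans_le hy0)
  have h2 : ‖⟪a, y⟫ • (x - y) - ⟪a, x - y⟫ • y‖ ≤ (1 + 2 * τ) * ‖x - y‖ := by
    refine (norm_sub_le _ _).trans ?_
    rw [norm_smul, norm_smul, Real.norm_eq_abs, Real.norm_eq_abs, abs_of_pos (by linarith)]
    nlinarith [norm_nonneg (x - y)]
  have h3 : (1 - τ) ^ 2 ≤ ⟪a, x⟫ * ⟪a, y⟫ := by nlinarith
  rw [div_mul_eq_mul_div, le_div_iff₀ (by positivity), mul_comm, dist_eq_norm x y]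
  refine (mul_le_mul_of_nonneg_right h3 dist_nonneg).trans ?_
  rw [h]; exact h2

lemma dist_le_dist_centralProj (hτ : τ < 1 / 2) (hx : |⟪a, x⟫ - 1| ≤ τ)
    (hy : |⟪a, y⟫ - 1| ≤ τ) (hxy : |⟪a, x - y⟫| * ‖y‖ ≤ τ * ‖x - y‖) :
    dist x y ≤ (1 + τ) ^ 2 / (1 - 2 * τ) * dist (centralProj a x) (centralProj a y) := by
  have hτ0 : 0 ≤ τ := (abs_nonneg _).trans hx
  rw [abs_le] at hx hy
  have hx0 : 0 < ⟪a, x⟫ := by linarith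
  have hy0 : 0 < ⟪a, y⟫ := by linarith
  have h := dist_centralProj hx0 hy0
  have h2 : (1 - 2 * τ) * ‖x - y‖ ≤ ‖⟪a, y⟫ • (x - y) - ⟪a, x - y⟫ • y‖ := by
    refine le_trans ?_ (norm_sub_norm_le _ _)
    rw [norm_smul, norm_smul, Real.norm_eq_abs, Real.norm_eq_abs, abs_of_pos hy0]
    nlinarith [norm_nonneg (x - y)]
  have h3 : ⟪a, x⟫ * ⟪a, y⟫ ≤ (1 + τ) ^ 2 := by nlinarith
  rw [div_mul_eq_mul_div, le_div_iff₀ (by linarith), mul_comm, dist_eq_norm x y]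
  refine (h2.trans h.ge).trans (mul_le_mul_of_nonneg_right h3 dist_nonneg)

end

lemma hasFDerivAt_gauge_smul {m : ℕ} {K : Set (Euc m)} {x : Euc m} {c : ℝ} (hc : 0 < c)
    {f' : Euc m →L[ℝ] ℝ} (hx : HasFDerivAt (gauge K) f' x) :
    HasFDerivAt (gauge K) f' (c • x) := by
  have h1 : HasFDerivAt (fun y : Euc m => c⁻¹ • y) (c⁻¹ • ContinuousLinearMap.id ℝ (Euc m))
      (c • x) := (hasFDerivAt_id _).const_smul c⁻¹
  have h2 : HasFDerivAt (gauge K) f' (c⁻¹ • c • x) := by rwa [inv_smul_smul₀ hc.ne']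
  have h3 := (h2.comp (c • x) h1).const_mul c
  refine (h3.congr_fderiv ?_).congr_of_eventuallyEq (.of_forall fun y => ?_)
  · ext y
    simp [mul_inv_cancel_left₀ hc.ne']
  · change gauge K y = c * gauge K (c⁻¹ • y)
    rw [gauge_smul_of_nonneg (inv_pos.2 hc).le, smul_eq_mul, mul_inv_cancel_left₀ hc.ne']

lemma DifferentiableAt.gauge_smul {m : ℕ} {K : Set (Euc m)} {x : Euc m} {c : ℝ} (hc : 0 < c)
    (hx : DifferentiableAt ℝ (gauge K) x) : DifferentiableAt ℝ (gauge K) (c • x) :=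
  (hasFDerivAt_gauge_smul hc hx.hasFDerivAt).differentiableAt

lemma gradient_gauge_smul {m : ℕ} {K : Set (Euc m)} {x : Euc m} {c : ℝ} (hc : 0 < c)
    (hx : DifferentiableAt ℝ (gauge K) x) :
    gradient (gauge K) (c • x) = gradient (gauge K) x := by
  rw [gradient, gradient, (hasFDerivAt_gauge_smul hc hx.hasFDerivAt).fderiv]

lemma measure_le_of_countable_cover {X : Type*} [MeasurableSpace X] {μ ν : Measure X}
    {s : Set X} {t : ℕ → Set X} (ht : ∀ i, MeasurableSet (t i)) (hs : s ⊆ ⋃ i, t i)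
    (h : ∀ i, ∀ E, MeasurableSet E → E ⊆ s ∩ t i → μ E ≤ ν E) :
    ∀ E, MeasurableSet E → E ⊆ s → μ E ≤ ν E := by
  intro E hE hEs
  have h1 : E = ⋃ i, E ∩ disjointed t i := by
    rw [← inter_iUnion, iUnion_disjointed, inter_eq_left.2 (hEs.trans hs)]
  have hd : Pairwise (Function.onFun Disjoint fun i => E ∩ disjointed t i) := fun i j hij =>
    (disjoint_disjointed t hij).mono inter_subset_right inter_subset_right
  have hm : ∀ i, MeasurableSet (E ∩ disjointed t i) := fun i =>
    hE.inter (MeasurableSet.disjointed ht i)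
  rw [h1, measure_iUnion hd hm, measure_iUnion hd hm]
  exact ENNReal.tsum_le_tsum fun i => h i _ (hm i)
    fun x hx => ⟨hEs hx.1, disjointed_subset t i hx.2⟩

/-- The surface measure of `K` up to a constant, written through the gauge of `K`. -/
def coneMeasure {m : ℕ} (K : Set (Euc m)) : Measure (Euc m) :=
  ((volume.restrict K).withDensity fun x => ENNReal.ofReal ‖gradient (gauge K) x‖).map
    (radialProj K)

lemma coneOver_eq_preimage {m : ℕ} {K E : Set (Euc m)} (hE1 : ∀ x ∈ E, gauge K x = 1) :
    coneOver K E = radialProj K ⁻¹' E := by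
  ext x
  refine ⟨fun h => h.2, fun h => ⟨?_, h⟩⟩
  rintro rfl
  have := hE1 _ h
  simp [radialProj] at this

lemma coneMeasure_apply {m : ℕ} {K E : Set (Euc m)} (hK : IsConvexBody K)
    (h0 : (0 : Euc m) ∈ interior K) (hE : MeasurableSet E) (hE1 : ∀ x ∈ E, gauge K x = 1) :
    coneMeasure K E = ∫⁻ x in K ∩ coneOver K E, ENNReal.ofReal ‖gradient (gauge K) x‖ := by
  have h1 := hK.measurable_radialProj h0 hE
  rw [coneMeasure, Measure.map_apply (hK.measurable_radialProj h0) hE, withDensity_apply _ h1,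
    Measure.restrict_restrict h1, coneOver_eq_preimage hE1, inter_comm]

namespace IsConvexBody

section Local
variable {n : ℕ} {K E : Set (Euc (n + 1))} {κ : ℝ≥0∞} {R τ : ℝ} {a : Euc (n + 1)}

lemma one_le_norm_gradient_gauge {m : ℕ} {K : Set (Euc m)} (hK : IsConvexBody K)
    (h0 : 0 ∈ interior K) {R : ℝ} (hR : ∀ x ∈ K, ‖x‖ ≤ R) {x : Euc m} (hx : gauge K x = 1)
    (hd : DifferentiableAt ℝ (gauge K) x) : 1 ≤ R * ‖gradient (gauge K) x‖ := by
  have h1 : ⟪x, gradient (gauge K) x⟫ = 1 := by rw [inner_gradient, fderiv_gauge_self hd, hx]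
  rw [← h1]
  refine (real_inner_le_norm _ _).trans ?_
  gcongr
  exact hR x ((hK.gauge_le_one_iff h0).1 hx.le)

lemma abs_inner_sub_one_le {m : ℕ} {K : Set (Euc m)} (hK : IsConvexBody K)
    (h0 : 0 ∈ interior K) {R τ : ℝ} (hR : ∀ x ∈ K, ‖x‖ ≤ R) {a x : Euc m} (hx : gauge K x = 1)
    (hd : DifferentiableAt ℝ (gauge K) x) (ha : ‖gradient (gauge K) x - a‖ * R ≤ τ) :
    |⟪a, x⟫ - 1| ≤ τ := by
  have h1 : ⟪x, gradient (gauge K) x⟫ = 1 := by rw [inner_gradient, fderiv_gauge_self hd, hx]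
  have h2 : ⟪a, x⟫ - 1 = ⟪a - gradient (gauge K) x, x⟫ := by
    rw [inner_sub_left, real_inner_comm x (gradient (gauge K) x), h1]
  rw [h2]
  refine (abs_real_inner_le_norm _ _).trans (le_trans ?_ ha)
  rw [norm_sub_rev]
  gcongr
  exact hR x ((hK.gauge_le_one_iff h0).1 hx.le)

lemma norm_gradient_sub_le {m : ℕ} {K : Set (Euc m)} (hK : IsConvexBody K)
    (h0 : 0 ∈ interior K) {R τ : ℝ} (hR0 : 0 < R) (hτ : 0 ≤ τ) (hR : ∀ x ∈ K, ‖x‖ ≤ R)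
    {a x : Euc m} (hx : gauge K x = 1)
    (hd : DifferentiableAt ℝ (gauge K) x) (ha : ‖gradient (gauge K) x - a‖ * R ≤ τ) :
    ‖gradient (gauge K) x - a‖ ≤ τ * ‖gradient (gauge K) x‖ := by
  have h1 := hK.one_le_norm_gradient_gauge h0 hR hx hd
  refine le_of_mul_le_mul_right (ha.trans ?_) hR0
  nlinarith

lemma gradient_gauge_of_mem_coneOver {m : ℕ} {K E : Set (Euc m)} (hK : IsConvexBody K)
    (h0 : 0 ∈ interior K) (hD : ∀ x ∈ E, DifferentiableAt ℝ (gauge K) x) {x : Euc m}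
    (hx : x ∈ coneOver K E) :
    gradient (gauge K) x = gradient (gauge K) (radialProj K x) := by
  rw [← gradient_gauge_smul (hK.gauge_pos h0 hx.1) (hD _ hx.2), hK.gauge_smul_radialProj h0 hx.1]

/-- Comparison of the Hausdorff measure with the cone measure on a set where the gradient of
the gauge is almost constant. -/
lemma hausdorffMeasure_le_coneMeasure_of_approx (hK : IsConvexBody K) (h0 : 0 ∈ interior K)
    (hκ : IsConeConst n κ) (hE : MeasurableSet E) (hE1 : ∀ x ∈ E, gauge K x = 1)
    (hD : ∀ x ∈ E, DifferentiableAt ℝ (gauge K) x) (hR0 : 0 < R) (hR : ∀ x ∈ K, ‖x‖ ≤ R)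
    (hτ0 : 0 ≤ τ) (hτ : τ < 1 / 2) (ha : ∀ x ∈ E, ‖gradient (gauge K) x - a‖ * R ≤ τ)
    (hlin : ∀ x ∈ E, ∀ y ∈ E, |⟪a, x - y⟫| * R ≤ τ * ‖x - y‖) :
    κ * μH[n] E ≤ ENNReal.ofReal (((1 + τ) ^ 2 / (1 - 2 * τ)) ^ n *
      ((1 - τ)⁻¹ ^ (n + 1) * (1 + τ))) * coneMeasure K E := by
  have h1 : ∀ x ∈ E, |⟪a, x⟫ - 1| ≤ τ := fun x hx =>
    hK.abs_inner_sub_one_le h0 hR (hE1 x hx) (hD x hx) (ha x hx)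
  have hC0 : 0 ≤ (1 + τ) ^ 2 / (1 - 2 * τ) := div_nonneg (by positivity) (by linarith)
  have hτ1 : 0 < 1 - τ := by linarith
  have hyR : ∀ y ∈ E, ‖y‖ ≤ R := fun y hy => hR y ((hK.gauge_le_one_iff h0).1 (hE1 y hy).le)
  have h2 := hK.hausdorffMeasure_le_cone h0 hκ hE hE1 (a := a) (α := 1 - τ) hτ1
    (fun x hx => by have := abs_le.1 (h1 x hx); linarith)
    (C := Real.toNNReal ((1 + τ) ^ 2 / (1 - 2 * τ))) (fun x hx y hy => by
      rw [Real.coe_toNNReal _ hC0]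
      refine dist_le_dist_centralProj hτ (h1 x hx) (h1 y hy) (le_trans ?_ (hlin x hx y hy))
      gcongr
      exact hyR y hy)
  have h3 : ENNReal.ofReal ‖a‖ * volume (K ∩ coneOver K E) ≤
      ENNReal.ofReal (1 + τ) * coneMeasure K E := by
    rw [coneMeasure_apply hK h0 hE hE1, ← lintegral_const_mul' _ _ ENNReal.ofReal_ne_top,
      ← setLIntegral_const]
    refine setLIntegral_mono' (hK.isCompact.measurableSet.inter (hK.measurableSet_coneOver h0 hE))
      fun x hx => ?_
    rw [← ENNReal.ofReal_mul (by linarith), hK.gradient_gauge_of_mem_coneOver h0 hD hx.2]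
    refine ENNReal.ofReal_le_ofReal ?_
    have hxE := hx.2.2
    have h4 := hK.norm_gradient_sub_le h0 hR0 hτ0 hR (hE1 _ hxE) (hD _ hxE) (ha _ hxE)
    have h5 := norm_sub_norm_le a (gradient (gauge K) (radialProj K x))
    rw [norm_sub_rev] at h5
    linarith
  refine h2.trans ?_
  rw [ENNReal.ofReal_mul (by positivity), ENNReal.ofReal_mul (by positivity),
    ENNReal.ofReal_pow hC0, mul_assoc, mul_assoc]
  exact mul_le_mul_right (mul_le_mul_right h3 _) _

lemma coneMeasure_le_hausdorffMeasure_of_approx (hK : IsConvexBody K) (h0 : 0 ∈ interior K)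
    (hκ : IsConeConst n κ) (hE : MeasurableSet E) (hE1 : ∀ x ∈ E, gauge K x = 1)
    (hD : ∀ x ∈ E, DifferentiableAt ℝ (gauge K) x) (hR0 : 0 < R) (hR : ∀ x ∈ K, ‖x‖ ≤ R)
    (hτ0 : 0 ≤ τ) (hτ : τ < 1 / 2) (ha : ∀ x ∈ E, ‖gradient (gauge K) x - a‖ * R ≤ τ)
    (hlin : ∀ x ∈ E, ∀ y ∈ E, |⟪a, x - y⟫| * R ≤ τ * ‖x - y‖) :
    coneMeasure K E ≤ ENNReal.ofReal ((1 - τ)⁻¹ * (((1 + 2 * τ) / (1 - τ) ^ 2) ^ n *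
      (1 + τ) ^ (n + 1))) * (κ * μH[n] E) := by
  have h1 : ∀ x ∈ E, |⟪a, x⟫ - 1| ≤ τ := fun x hx =>
    hK.abs_inner_sub_one_le h0 hR (hE1 x hx) (hD x hx) (ha x hx)
  have hτ1 : 0 < 1 - τ := by linarith
  have hC0 : 0 ≤ (1 + 2 * τ) / (1 - τ) ^ 2 := by positivity
  have hyR : ∀ y ∈ E, ‖y‖ ≤ R := fun y hy => hR y ((hK.gauge_le_one_iff h0).1 (hE1 y hy).le)
  have h2 := hK.cone_le_hausdorffMeasure h0 hκ hE hE1 (a := a)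
    (fun x hx => by have := abs_le.1 (h1 x hx); linarith) (β := 1 + τ) (by linarith)
    (fun x hx => by have := abs_le.1 (h1 x hx); linarith)
    (C := Real.toNNReal ((1 + 2 * τ) / (1 - τ) ^ 2)) (fun x hx y hy => by
      rw [Real.coe_toNNReal _ hC0]
      refine dist_centralProj_le (by linarith) (h1 x hx) (h1 y hy)
        (le_trans ?_ (hlin x hx y hy))
      gcongr
      exact hyR y hy)
  have h3 : coneMeasure K E ≤
      ENNReal.ofReal (1 - τ)⁻¹ * (ENNReal.ofReal ‖a‖ * volume (K ∩ coneOver K E)) := by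
    rw [coneMeasure_apply hK h0 hE hE1, ← setLIntegral_const,
      ← lintegral_const_mul' _ _ ENNReal.ofReal_ne_top]
    refine setLIntegral_mono' (hK.isCompact.measurableSet.inter (hK.measurableSet_coneOver h0 hE))
      fun x hx => ?_
    rw [← ENNReal.ofReal_mul (by positivity), hK.gradient_gauge_of_mem_coneOver h0 hD hx.2]
    refine ENNReal.ofReal_le_ofReal ?_
    have hxE := hx.2.2
    have h4 := hK.norm_gradient_sub_le h0 hR0 hτ0 hR (hE1 _ hxE) (hD _ hxE) (ha _ hxE)
    have h5 := norm_sub_norm_le (gradient (gauge K) (radialProj K x)) a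
    rw [← div_eq_inv_mul, le_div_iff₀ hτ1]
    linarith
  refine h3.trans ?_
  rw [ENNReal.ofReal_mul (by positivity), ENNReal.ofReal_mul (by positivity),
    ENNReal.ofReal_pow hC0, mul_assoc, mul_assoc]
  exact mul_le_mul_right h2 _

end Local

end IsConvexBody

namespace IsConvexBody

lemma exists_norm_le_pos {m : ℕ} {K : Set (Euc m)} (hK : IsConvexBody K) :
    ∃ R : ℝ, 0 < R ∧ ∀ x ∈ K, ‖x‖ ≤ R :=
  hK.isCompact.isBounded.exists_pos_norm_le

/-- The central projection of a piece of the boundary to a hyperplane is co-Lipschitz. -/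
lemma exists_dist_le_dist_centralProj {m : ℕ} {K : Set (Euc m)} (hK : IsConvexBody K)
    (h0 : 0 ∈ interior K) (a : Euc m) :
    ∃ C : NNReal, ∀ x y, gauge K x = 1 → gauge K y = 1 → 1 / 2 ≤ ⟪a, x⟫ → 1 / 2 ≤ ⟪a, y⟫ →
      dist x y ≤ C * dist (centralProj a x) (centralProj a y) := by
  obtain ⟨R, hR0, hR⟩ := hK.exists_norm_le_pos
  obtain ⟨Λ, hΛ⟩ := hK.exists_lipschitzWith_gauge h0
  refine ⟨Real.toNNReal (‖a‖ * R + (‖a‖ * R) ^ 2 * Λ * (2 * R)), fun x y hx hy hax hay => ?_⟩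
  rw [Real.coe_toNNReal _ (by positivity)]
  have hA : ∀ z, gauge K z = 1 → ⟪a, z⟫ ≤ ‖a‖ * R := fun z hz => by
    refine (real_inner_le_norm _ _).trans ?_
    gcongr
    exact hR z ((hK.gauge_le_one_iff h0).1 hz.le)
  have hAx : 0 < ⟪a, x⟫ := by linarith
  have hAy : 0 < ⟪a, y⟫ := by linarith
  have hg : ∀ z, gauge K z = 1 → 0 < ⟪a, z⟫ → gauge K (centralProj a z) = ⟪a, z⟫⁻¹ :=
    fun z hz hp => by
      rw [centralProj, gauge_smul_of_nonneg (inv_pos.2 hp).le, hz, smul_eq_mul, mul_one]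
  have hq : ‖centralProj a y‖ ≤ 2 * R := by
    rw [centralProj, norm_smul, norm_inv, Real.norm_eq_abs, abs_of_pos hAy]
    have h1 : ⟪a, y⟫⁻¹ ≤ 2 := by
      rw [inv_le_comm₀ hAy two_pos]; linarith
    have h2 := hR y ((hK.gauge_le_one_iff h0).1 hy.le)
    gcongr
  have hL := hΛ.dist_le_mul (centralProj a x) (centralProj a y)
  rw [hg x hx hAx, hg y hy hAy, Real.dist_eq] at hL
  have hd : |⟪a, x⟫ - ⟪a, y⟫| ≤ (‖a‖ * R) ^ 2 * Λ * dist (centralProj a x) (centralProj a y) := by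
    have h1 : ⟪a, x⟫ - ⟪a, y⟫ = -(⟪a, x⟫ * ⟪a, y⟫ * (⟪a, x⟫⁻¹ - ⟪a, y⟫⁻¹)) := by
      field_simp
      ring
    rw [h1, abs_neg, abs_mul, abs_of_pos (mul_pos hAx hAy), mul_assoc ((‖a‖ * R) ^ 2), sq]
    exact mul_le_mul (mul_le_mul (hA x hx) (hA y hy) hAy.le (by positivity)) hL (abs_nonneg _)
      (by positivity)
  have hsplit : x - y = ⟪a, x⟫ • (centralProj a x - centralProj a y) +
      (⟪a, x⟫ - ⟪a, y⟫) • centralProj a y := by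
    have h1 : ⟪a, x⟫ • centralProj a x = x := by rw [centralProj, smul_inv_smul₀ hAx.ne']
    have h2 : ⟪a, y⟫ • centralProj a y = y := by rw [centralProj, smul_inv_smul₀ hAy.ne']
    rw [smul_sub, sub_smul, h1, h2]
    abel
  rw [dist_eq_norm x y, hsplit]
  refine (norm_add_le _ _).trans ?_
  rw [norm_smul, norm_smul, Real.norm_eq_abs, Real.norm_eq_abs, abs_of_pos hAx, ← dist_eq_norm,
    add_mul]
  refine add_le_add ?_ ?_
  · gcongr
    exact hA x hx
  · calc |⟪a, x⟫ - ⟪a, y⟫| * ‖centralProj a y‖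
        ≤ ((‖a‖ * R) ^ 2 * Λ * dist (centralProj a x) (centralProj a y)) * (2 * R) := by gcongr
      _ = _ := by ring

variable {n : ℕ} {K E : Set (Euc (n + 1))} {κ : ℝ≥0∞}

lemma hausdorffMeasure_eq_zero_of_cone (hK : IsConvexBody K) (h0 : 0 ∈ interior K)
    (hκ0 : κ ≠ 0) (hκ : IsConeConst n κ) (hE : MeasurableSet E)
    (hE1 : ∀ x ∈ E, gauge K x = 1) (hv : volume (K ∩ coneOver K E) = 0) :
    μH[n] E = 0 := by
  let a : ℕ → Euc (n + 1) := TopologicalSpace.denseSeq (Euc (n + 1))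
  have hcov : E ⊆ ⋃ j, E ∩ {x | 1 / 2 < ⟪a j, x⟫} := by
    intro x hx
    have hx0 : x ≠ 0 := by
      rintro rfl
      simpa using hE1 0 hx
    have hopen : IsOpen {b : Euc (n + 1) | 1 / 2 < ⟪b, x⟫} :=
      isOpen_lt continuous_const (by fun_prop)
    obtain ⟨b, hb, j, rfl⟩ :=
      (TopologicalSpace.denseRange_denseSeq (Euc (n + 1))).inter_open_nonempty
      _ hopen ⟨(‖x‖ ^ 2)⁻¹ • x, by
        have : 0 < ‖x‖ := norm_pos_iff.2 hx0
        change 1 / 2 < ⟪(‖x‖ ^ 2)⁻¹ • x, x⟫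
        rw [real_inner_smul_left, real_inner_self_eq_norm_sq, inv_mul_cancel₀ (by positivity)]
        norm_num⟩
    exact mem_iUnion.2 ⟨j, hx, hb⟩
  refine measure_mono_null hcov (measure_iUnion_null fun j => ?_)
  obtain ⟨C, hC⟩ := hK.exists_dist_le_dist_centralProj h0 (a j)
  have hm : MeasurableSet (E ∩ {x | 1 / 2 < ⟪a j, x⟫}) :=
    hE.inter (isOpen_lt continuous_const (by fun_prop)).measurableSet
  have h1 := hK.hausdorffMeasure_le_cone h0 hκ hm (fun x hx => hE1 x hx.1) (a := a j)
    (α := 1 / 2) (by norm_num) (fun x hx => le_of_lt hx.2) (C := C) fun x hx y hy =>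
      hC x y (hE1 x hx.1) (hE1 y hy.1) (le_of_lt hx.2) (le_of_lt hy.2)
  have h2 : volume (K ∩ coneOver K (E ∩ {x | 1 / 2 < ⟪a j, x⟫})) = 0 := by
    refine measure_mono_null ?_ hv
    rintro x ⟨hxK, hx0, hxE⟩
    exact ⟨hxK, hx0, hxE.1⟩
  rw [h2, mul_zero, mul_zero, mul_zero, nonpos_iff_eq_zero, mul_eq_zero] at h1
  exact h1.resolve_left hκ0

lemma measurableSet_gauge_eq_one {m : ℕ} {K : Set (Euc m)} (hK : IsConvexBody K)
    (h0 : 0 ∈ interior K) : MeasurableSet {x | gauge K x = 1} :=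
  (isClosed_eq (hK.continuous_gauge h0) continuous_const).measurableSet

lemma volume_coneOver_not_differentiableAt {m : ℕ} {K : Set (Euc m)} (hK : IsConvexBody K)
    (h0 : 0 ∈ interior K) {E : Set (Euc m)} (hE : ∀ x ∈ E, ¬ DifferentiableAt ℝ (gauge K) x) :
    volume (K ∩ coneOver K E) = 0 := by
  refine measure_mono_null (fun x hx => ?_) (ae_iff.1 (hK.ae_differentiableAt_gauge h0))
  intro hd
  exact hE _ hx.2.2 (hd.gauge_smul (inv_pos.2 (hK.gauge_pos h0 hx.2.1)))

/-- Almost every boundary point is a point of differentiability of the gauge. -/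
lemma hausdorffMeasure_not_differentiableAt (hK : IsConvexBody K) (h0 : 0 ∈ interior K)
    (hκ0 : κ ≠ 0) (hκ : IsConeConst n κ) :
    μH[n] {x | gauge K x = 1 ∧ ¬ DifferentiableAt ℝ (gauge K) x} = 0 :=
  hK.hausdorffMeasure_eq_zero_of_cone h0 hκ0 hκ
    ((hK.measurableSet_gauge_eq_one h0).inter (measurableSet_of_differentiableAt ℝ _).compl)
    (fun _ hx => hx.1) (hK.volume_coneOver_not_differentiableAt h0 fun _ hx => hx.2)

lemma coneMeasure_not_differentiableAt {m : ℕ} {K : Set (Euc m)} (hK : IsConvexBody K)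
    (h0 : 0 ∈ interior K) :
    coneMeasure K {x | gauge K x = 1 ∧ ¬ DifferentiableAt ℝ (gauge K) x} = 0 := by
  have hm : MeasurableSet {x | gauge K x = 1 ∧ ¬ DifferentiableAt ℝ (gauge K) x} :=
    (hK.measurableSet_gauge_eq_one h0).inter (measurableSet_of_differentiableAt ℝ _).compl
  rw [coneMeasure_apply hK h0 hm fun _ hx => hx.1]
  exact setLIntegral_measure_zero _ _
    (hK.volume_coneOver_not_differentiableAt h0 fun _ hx => hx.2)

end IsConvexBody

namespace IsConvexBody

/-- To compare two measures on the smooth part of the boundary of `K`, it is enough to do it on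
sets where the gradient of the gauge is almost constant. -/
lemma measure_le_of_approx {m : ℕ} {K : Set (Euc m)}
    {R τ : ℝ} (hR0 : 0 < R) (hτ0 : 0 < τ) {μ ν : Measure (Euc m)}
    (h : ∀ E a, MeasurableSet E → (∀ x ∈ E, gauge K x = 1) →
      (∀ x ∈ E, DifferentiableAt ℝ (gauge K) x) →
      (∀ x ∈ E, ‖gradient (gauge K) x - a‖ * R ≤ τ) →
      (∀ x ∈ E, ∀ y ∈ E, |⟪a, x - y⟫| * R ≤ τ * ‖x - y‖) → μ E ≤ ν E) :
    ∀ E, MeasurableSet E → E ⊆ {x | gauge K x = 1 ∧ DifferentiableAt ℝ (gauge K) x} →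
      μ E ≤ ν E := by
  have hδ : 0 < τ / R := div_pos hτ0 hR0
  refine measure_le_of_countable_cover
    (t := fun j => gradient (gauge K) ⁻¹'
      Metric.ball (TopologicalSpace.denseSeq (Euc m) j) (τ / R / 2))
    (fun j => measurable_gradient Metric.isOpen_ball.measurableSet) (fun x _ => ?_) fun j => ?_
  · obtain ⟨j, hj⟩ := (TopologicalSpace.denseRange_denseSeq (Euc m)).exists_dist_lt
      (gradient (gauge K) x) (half_pos hδ)
    exact mem_iUnion.2 ⟨j, hj⟩
  obtain ⟨t, A, -, htm, hcov, happ, hA⟩ :=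
    exists_partition_approximatesLinearOn_of_hasFDerivWithinAt (gauge K)
      ({x | gauge K x = 1 ∧ DifferentiableAt ℝ (gauge K) x} ∩ gradient (gauge K) ⁻¹'
        Metric.ball (TopologicalSpace.denseSeq (Euc m) j) (τ / R / 2))
      (fderiv ℝ (gauge K)) (fun x hx => hx.1.2.hasFDerivAt.hasFDerivWithinAt)
      (fun _ => Real.toNNReal (τ / R)) (fun _ => by simpa using hδ)
  refine measure_le_of_countable_cover htm hcov fun i E hE hEs => ?_
  rcases E.eq_empty_or_nonempty with rfl | ⟨z, hz⟩
  · simp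
  obtain ⟨w, hw, hAw⟩ := hA ⟨z, (hEs hz).1⟩ i
  refine h E (gradient (gauge K) w) hE (fun x hx => (hEs hx).1.1.1) (fun x hx => (hEs hx).1.1.2)
    (fun x hx => ?_) fun x hx y hy => ?_
  · rw [← le_div_iff₀ hR0, ← dist_eq_norm]
    have h1 : dist (gradient (gauge K) x) _ < _ := (hEs hx).1.2
    have h2 : dist (gradient (gauge K) w) _ < _ := hw.2
    have h3 := dist_triangle_right (gradient (gauge K) x) (gradient (gauge K) w)
      (TopologicalSpace.denseSeq (Euc m) j)
    linarith
  · have h1 := happ i x (hEs hx) y (hEs hy)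
    rw [(hEs hx).1.1.1, (hEs hy).1.1.1, sub_self, zero_sub, norm_neg, hAw, ← inner_gradient,
      real_inner_comm, Real.norm_eq_abs, Real.coe_toNNReal _ hδ.le, div_mul_eq_mul_div,
      le_div_iff₀ hR0] at h1
    exact h1

variable {n : ℕ} {K : Set (Euc (n + 1))} {κ : ℝ≥0∞}

lemma hausdorffMeasure_eq_coneMeasure_of_subset (hK : IsConvexBody K) (h0 : 0 ∈ interior K)
    (hκ : IsConeConst n κ) {E : Set (Euc (n + 1))} (hE : MeasurableSet E)
    (hEs : E ⊆ {x | gauge K x = 1 ∧ DifferentiableAt ℝ (gauge K) x}) :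
    κ * μH[n] E = coneMeasure K E := by
  obtain ⟨R, hR0, hR⟩ := hK.exists_norm_le_pos
  have key : ∀ (φ : ℝ → ℝ) (X Y : ℝ≥0∞), ContinuousAt φ 0 → φ 0 = 1 →
      (∀ τ, 0 < τ → τ < 1 / 2 → X ≤ ENNReal.ofReal (φ τ) * Y) → X ≤ Y := by
    intro φ X Y hφ hφ0 h
    have h1 : Filter.Tendsto (fun τ => ENNReal.ofReal (φ τ) * Y) (𝓝[>] 0) (𝓝 Y) := by
      have h2 : Filter.Tendsto (fun τ => ENNReal.ofReal (φ τ)) (𝓝[>] 0) (𝓝 1) := by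
        have := (ENNReal.continuous_ofReal.tendsto _).comp (hφ.tendsto.mono_left
          (nhdsWithin_le_nhds (s := Ioi 0)))
        rwa [hφ0, ENNReal.ofReal_one] at this
      simpa using ENNReal.Tendsto.mul_const (b := Y) h2 (Or.inl one_ne_zero)
    refine ge_of_tendsto h1 ?_
    filter_upwards [Ioo_mem_nhdsGT (show (0 : ℝ) < 1 / 2 by norm_num)] with τ hτ
    exact h τ hτ.1 hτ.2
  refine le_antisymm
    (key (fun τ => ((1 + τ) ^ 2 / (1 - 2 * τ)) ^ n * ((1 - τ)⁻¹ ^ (n + 1) * (1 + τ))) _ _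
      (by fun_prop (disch := norm_num)) (by norm_num) fun τ hτ0 hτ => ?_)
    (key (fun τ => (1 - τ)⁻¹ * (((1 + 2 * τ) / (1 - τ) ^ 2) ^ n * (1 + τ) ^ (n + 1))) _ _
      (by fun_prop (disch := norm_num)) (by norm_num) fun τ hτ0 hτ => ?_)
  · exact measure_le_of_approx hR0 hτ0 (μ := κ • μH[n])
      (ν := ENNReal.ofReal (((1 + τ) ^ 2 / (1 - 2 * τ)) ^ n * ((1 - τ)⁻¹ ^ (n + 1) * (1 + τ))) •
        coneMeasure K) (fun F a hF hF1 hFD hFa hFl =>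
          hK.hausdorffMeasure_le_coneMeasure_of_approx h0 hκ hF hF1 hFD hR0 hR hτ0.le hτ hFa hFl)
      E hE hEs
  · exact measure_le_of_approx hR0 hτ0 (μ := coneMeasure K)
      (ν := ENNReal.ofReal ((1 - τ)⁻¹ * (((1 + 2 * τ) / (1 - τ) ^ 2) ^ n * (1 + τ) ^ (n + 1))) •
        κ • μH[n]) (fun F a hF hF1 hFD hFa hFl =>
          hK.coneMeasure_le_hausdorffMeasure_of_approx h0 hκ hF hF1 hFD hR0 hR hτ0.le hτ hFa hFl)
      E hE hEs

lemma frontier_eq_gauge {m : ℕ} {K : Set (Euc m)} (hK : IsConvexBody K) (h0 : 0 ∈ interior K) :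
    frontier K = {x | gauge K x = 1} := by
  ext x
  exact (gauge_eq_one_iff_mem_frontier hK.convex (mem_nhds h0)).symm

lemma gauge_radialProj {m : ℕ} {K : Set (Euc m)} (hK : IsConvexBody K) (h0 : 0 ∈ interior K)
    {x : Euc m} (hx : x ≠ 0) : gauge K (radialProj K x) = 1 := by
  have hp := hK.gauge_pos h0 hx
  rw [radialProj, gauge_smul_of_nonneg (inv_pos.2 hp).le, smul_eq_mul, inv_mul_cancel₀ hp.ne']

lemma coneMeasure_compl_frontier (hK : IsConvexBody K) (h0 : 0 ∈ interior K) :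
    coneMeasure K (frontier K)ᶜ = 0 := by
  rw [coneMeasure, Measure.map_apply (hK.measurable_radialProj h0)
    isClosed_frontier.measurableSet.compl]
  refine withDensity_absolutelyContinuous _ _ (Measure.absolutelyContinuous_of_le
    Measure.restrict_le_self (measure_mono_null (t := {0}) (fun x hx => ?_) (by simp)))
  by_contra hx0
  refine hx ?_
  rw [hK.frontier_eq_gauge h0]
  exact hK.gauge_radialProj h0 hx0

/-- The surface area of a convex body expressed through its gauge. -/
lemma smul_hausdorffMeasure_restrict_frontier (hK : IsConvexBody K) (h0 : 0 ∈ interior K)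
    (hκ0 : κ ≠ 0) (hκ : IsConeConst n κ) :
    κ • (μH[n] : Measure (Euc (n + 1))).restrict (frontier K) = coneMeasure K := by
  ext E hE
  have hF : MeasurableSet (frontier K) := isClosed_frontier.measurableSet
  have hDm : MeasurableSet {x | DifferentiableAt ℝ (gauge K) x} :=
    measurableSet_of_differentiableAt ℝ _
  have hsplit : ∀ μ : Measure (Euc (n + 1)),
      μ {x | gauge K x = 1 ∧ ¬ DifferentiableAt ℝ (gauge K) x} = 0 →
      μ (E ∩ frontier K) = μ (E ∩ frontier K ∩ {x | DifferentiableAt ℝ (gauge K) x}) := by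
    intro μ hμ
    have h1 : μ ((E ∩ frontier K) \ {x | DifferentiableAt ℝ (gauge K) x}) = 0 := by
      refine measure_mono_null ?_ hμ
      rintro x ⟨⟨-, hx⟩, hxD⟩
      rw [hK.frontier_eq_gauge h0] at hx
      exact ⟨hx, hxD⟩
    rw [← measure_inter_add_sdiff (E ∩ frontier K) hDm, h1, add_zero]
  have hcompl : coneMeasure K (E \ frontier K) = 0 :=
    measure_mono_null (fun x hx => hx.2) (hK.coneMeasure_compl_frontier h0)
  rw [Measure.smul_apply, Measure.restrict_apply hE, smul_eq_mul,
    hsplit _ (hK.hausdorffMeasure_not_differentiableAt h0 hκ0 hκ),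
    ← measure_inter_add_sdiff E hF,
    hcompl, add_zero,
    hsplit _ (hK.coneMeasure_not_differentiableAt h0)]
  refine hK.hausdorffMeasure_eq_coneMeasure_of_subset h0 hκ ((hE.inter hF).inter hDm) ?_
  rw [hK.frontier_eq_gauge h0]
  exact fun x hx => ⟨hx.1.2, hx.2⟩

end IsConvexBody

namespace IsConvexBody

section Normal
variable {m : ℕ} {K : Set (Euc m)} {x : Euc m}

lemma inner_le_inner_mul_gauge (hK : IsConvexBody K) (h0 : 0 ∈ interior K) {u : Euc m}
    (hu : ∀ y ∈ K, ⟪y - x, u⟫ ≤ 0) (z : Euc m) : ⟪z, u⟫ ≤ ⟪x, u⟫ * gauge K z := by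
  rcases eq_or_ne z 0 with rfl | hz
  · simp
  have hp := hK.gauge_pos h0 hz
  have h1 := hu ((gauge K z)⁻¹ • z)
    ((hK.gauge_le_one_iff h0).1 (hK.gauge_radialProj h0 hz).le)
  rwa [inner_sub_left, sub_nonpos, real_inner_smul_left, inv_mul_le_iff₀ hp, mul_comm] at h1

/-- At a point of differentiability of the gauge there is only one outward normal. -/
lemma isOutwardNormalAt_eq (hK : IsConvexBody K) (h0 : 0 ∈ interior K)
    (hd : DifferentiableAt ℝ (gauge K) x) {u : Euc m} (hu : IsOutwardNormalAt K x u) :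
    u = ‖gradient (gauge K) x‖⁻¹ • gradient (gauge K) x := by
  obtain ⟨hx, hu1, hu2⟩ := hu
  rw [hK.frontier_eq_gauge h0] at hx
  have hx1 : gauge K x = 1 := hx
  have hs : 0 ≤ ⟪x, u⟫ := by simpa using hu2 0 (zero_mem h0)
  have h1 : HasFDerivAt (fun z => ⟪x, u⟫ * gauge K z - ⟪u, z⟫)
      (⟪x, u⟫ • fderiv ℝ (gauge K) x - innerSL ℝ u) x :=
    (hd.hasFDerivAt.const_mul _).sub (innerSL ℝ u).hasFDerivAt
  have h2 : IsLocalMin (fun z => ⟪x, u⟫ * gauge K z - ⟪u, z⟫) x := by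
    refine Filter.Eventually.of_forall fun z => ?_
    simp only [hx1, mul_one, real_inner_comm x u, sub_self]
    have := hK.inner_le_inner_mul_gauge h0 hu2 z
    rw [real_inner_comm z u]
    linarith
  have h3 := h2.hasFDerivAt_eq_zero h1
  have h4 : u = ⟪x, u⟫ • gradient (gauge K) x := by
    refine ext_inner_left ℝ fun y => ?_
    have h5 := congrArg (fun F : Euc m →L[ℝ] ℝ => F y) h3
    simp only [sub_apply, smul_apply, innerSL_apply_apply,
      zero_apply, smul_eq_mul] at h5
    rw [inner_smul_right, inner_gradient, real_inner_comm]
    linarith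
  have h5 : ⟪x, u⟫ * ‖gradient (gauge K) x‖ = 1 := by
    have h6 := congrArg norm h4
    rw [hu1, norm_smul, Real.norm_eq_abs, abs_of_nonneg hs] at h6
    exact h6.symm
  rw [inv_eq_of_mul_eq_one_left h5]
  exact h4

lemma gradient_gauge_ne_zero (hx : gauge K x = 1)
    (hd : DifferentiableAt ℝ (gauge K) x) : gradient (gauge K) x ≠ 0 := by
  intro h
  have h1 := inner_gradient (f := gauge K) x x
  rw [fderiv_gauge_self hd, hx, h, inner_zero_right] at h1
  exact zero_ne_one h1

lemma gaussMap_eq (hK : IsConvexBody K) (h0 : 0 ∈ interior K) (hx : x ∈ frontier K)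
    (hd : DifferentiableAt ℝ (gauge K) x) :
    gaussMap K x = ‖gradient (gauge K) x‖⁻¹ • gradient (gauge K) x := by
  have hx1 : gauge K x = 1 := by
    rw [hK.frontier_eq_gauge h0] at hx
    exact hx
  have hex : ∃ u, IsOutwardNormalAt K x u := by
    have hne := norm_ne_zero_iff.2 (gradient_gauge_ne_zero hx1 hd)
    refine ⟨‖gradient (gauge K) x‖⁻¹ • gradient (gauge K) x, hx, ?_, fun y hy => ?_⟩
    · rw [norm_smul, norm_inv, norm_norm, inv_mul_cancel₀ hne]
    · rw [inner_smul_right, inner_gradient, map_sub, fderiv_gauge_self hd, hx1]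
      refine mul_nonpos_of_nonneg_of_nonpos (by positivity) ?_
      have h1 := hK.fderiv_gauge_le h0 hd y
      have h2 := (hK.gauge_le_one_iff h0).2 hy
      linarith
  rw [gaussMap, dif_pos hex]
  exact hK.isOutwardNormalAt_eq h0 hd hex.choose_spec

end Normal

variable {n : ℕ} {K L : Set (Euc (n + 1))} {κ : ℝ≥0∞}

/-- The mixed volume as the integral of the support function against the surface area measure. -/
lemma mul_lintegral_surfMeasure (hK : IsConvexBody K) (h0 : 0 ∈ interior K)
    (hL : IsConvexBody L) (hκ0 : κ ≠ 0) (hκ : IsConeConst n κ) :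
    κ * ∫⁻ u, ENNReal.ofReal (supportFun L u) ∂(surfMeasure K) = mixedVol K L := by
  let G : Euc (n + 1) → Euc (n + 1) := fun x =>
    ‖gradient (gauge K) x‖⁻¹ • gradient (gauge K) x
  have hgrad : Measurable (gradient (gauge K)) := measurable_gradient
  have hGm : Measurable G := hgrad.norm.inv.smul hgrad
  have hexp : ((n + 1 : ℕ) : ℝ) - 1 = n := by push_cast; ring
  have hae : gaussMap K =ᵐ[(μH[n] : Measure (Euc (n + 1))).restrict (frontier K)] G := by
    have h1 : ∀ᵐ x ∂(μH[n] : Measure (Euc (n + 1))),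
        ¬ (gauge K x = 1 ∧ ¬ DifferentiableAt ℝ (gauge K) x) := by
      rw [ae_iff]
      simpa only [not_not] using hK.hausdorffMeasure_not_differentiableAt h0 hκ0 hκ
    filter_upwards [ae_restrict_mem isClosed_frontier.measurableSet, ae_restrict_of_ae h1]
      with x hx hx1
    refine hK.gaussMap_eq h0 hx ?_
    rw [hK.frontier_eq_gauge h0] at hx
    by_contra hd
    exact hx1 ⟨hx, hd⟩
  have hf : Measurable fun u => ENNReal.ofReal (supportFun L u) :=
    (continuous_supportFun hL.isCompact hL.nonempty).measurable.ennreal_ofReal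
  have hfG : Measurable fun x => ENNReal.ofReal (supportFun L (G x)) := hf.comp hGm
  have hfGr : Measurable fun x => ENNReal.ofReal (supportFun L (G (radialProj K x))) :=
    hfG.comp (hK.measurable_radialProj h0)
  have hae' : (fun x => ENNReal.ofReal (supportFun L (gaussMap K x)))
      =ᵐ[(μH[n] : Measure (Euc (n + 1))).restrict (frontier K)]
        fun x => ENNReal.ofReal (supportFun L (G x)) := by
    filter_upwards [hae] with x hx
    rw [hx]
  rw [surfMeasure, hexp, lintegral_map' hf.aemeasurable ⟨G, hGm, hae⟩,
    lintegral_congr_ae hae',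
    ← smul_eq_mul, ← lintegral_smul_measure, hK.smul_hausdorffMeasure_restrict_frontier h0 hκ0 hκ,
    coneMeasure, lintegral_map hfG (hK.measurable_radialProj h0),
    lintegral_withDensity_eq_lintegral_mul _ hgrad.norm.ennreal_ofReal hfGr, mixedVol]
  refine lintegral_congr_ae ?_
  filter_upwards [ae_restrict_of_ae (hK.ae_differentiableAt_gauge h0),
    ae_restrict_of_ae (ae_ne_zero n.succ_ne_zero)] with x hd hx0
  have hp := hK.gauge_pos h0 hx0
  have h1 : gradient (gauge K) (radialProj K x) = gradient (gauge K) x :=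
    gradient_gauge_smul (inv_pos.2 hp) hd
  have h2 : gradient (gauge K) x ≠ 0 := by
    rw [← h1]
    exact gradient_gauge_ne_zero (hK.gauge_radialProj h0 hx0) (hd.gauge_smul (inv_pos.2 hp))
  change ENNReal.ofReal ‖gradient (gauge K) x‖ * ENNReal.ofReal (supportFun L
    (‖gradient (gauge K) (radialProj K x)‖⁻¹ • gradient (gauge K) (radialProj K x))) = _
  rw [h1, supportFun_smul_right hL.isCompact hL.nonempty (by positivity),
    ← ENNReal.ofReal_mul (norm_nonneg _), mul_inv_cancel_left₀ (norm_ne_zero_iff.2 h2)]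

end IsConvexBody

lemma isOutwardNormalAt_vadd {m : ℕ} (K : Set (Euc m)) (v x u : Euc m) :
    IsOutwardNormalAt (v +ᵥ K) (v + x) u ↔ IsOutwardNormalAt K x u := by
  have hfr : frontier (v +ᵥ K) = v +ᵥ frontier K :=
    ((Homeomorph.vadd v).image_frontier K).symm
  rw [IsOutwardNormalAt, IsOutwardNormalAt, hfr, ← vadd_eq_add v x, vadd_mem_vadd_set_iff]
  refine and_congr_right fun _ => and_congr_right fun _ => ⟨fun h y hy => ?_, ?_⟩
  · have := h (v +ᵥ y) (vadd_mem_vadd_set hy)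
    rwa [vadd_eq_add, vadd_eq_add, add_sub_add_left_eq_sub] at this
  · rintro h _ ⟨y, hy, rfl⟩
    have := h y hy
    change ⟪v + y - (v + x), u⟫ ≤ 0
    rwa [add_sub_add_left_eq_sub]

lemma gaussMap_vadd {m : ℕ} (K : Set (Euc m)) (v x : Euc m) :
    gaussMap (v +ᵥ K) (v + x) = gaussMap K x := by
  have h : IsOutwardNormalAt (v +ᵥ K) (v + x) = IsOutwardNormalAt K x :=
    funext fun u => propext (isOutwardNormalAt_vadd K v x u)
  unfold gaussMap
  rw [h]

lemma surfMeasure_vadd {m : ℕ} (K : Set (Euc m)) (v : Euc m) :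
    surfMeasure (v +ᵥ K) = surfMeasure K := by
  let e : Euc m ≃ᵢ Euc m := IsometryEquiv.addLeft v
  have he : MeasurableEmbedding e := e.toHomeomorph.measurableEmbedding
  have hfr : frontier (v +ᵥ K) = e '' frontier K :=
    (e.toHomeomorph.image_frontier K).symm
  have hmap : (μH[(m : ℝ) - 1] : Measure (Euc m)).restrict (frontier (v +ᵥ K)) =
      ((μH[(m : ℝ) - 1] : Measure (Euc m)).restrict (frontier K)).map e := by
    have h1 := he.restrict_map (μH[(m : ℝ) - 1] : Measure (Euc m)) (e '' frontier K)
    rw [e.map_hausdorffMeasure, preimage_image_eq _ e.injective] at h1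
    rw [hfr, h1]
  have hg : gaussMap K = gaussMap (v +ᵥ K) ∘ e := funext fun x => (gaussMap_vadd K v x).symm
  rw [surfMeasure, surfMeasure, hmap, hg]
  by_cases h : AEMeasurable (gaussMap (v +ᵥ K))
      (((μH[(m : ℝ) - 1] : Measure (Euc m)).restrict (frontier K)).map e)
  · exact AEMeasurable.map_map_of_aemeasurable h he.measurable.aemeasurable
  · rw [Measure.map_of_not_aemeasurable h,
      Measure.map_of_not_aemeasurable fun h' => h (he.aemeasurable_map_iff.2 h')]

namespace IsConvexBody

lemma exists_zero_mem_interior_vadd {m : ℕ} {K : Set (Euc m)} (hK : IsConvexBody K) :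
    ∃ v : Euc m, (0 : Euc m) ∈ interior (v +ᵥ K) := by
  obtain ⟨x, hx⟩ := hK.interior_nonempty
  refine ⟨-x, ?_⟩
  rw [interior_vadd]
  exact ⟨x, hx, by simp⟩

variable {n : ℕ} {K L M : Set (Euc (n + 1))} {κ : ℝ≥0∞}

lemma mixedVol_eq_add (hK : IsConvexBody K) (hL : IsConvexBody L) (hM : IsConvexBody M)
    (hK0 : 0 ∈ interior K) (hL0 : 0 ∈ interior L) (hM0 : 0 ∈ interior M)
    (hS : surfMeasure M = surfMeasure K + surfMeasure L)
    {N : Set (Euc (n + 1))} (hN : IsConvexBody N) :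
    (mixedVol M N).toReal = (mixedVol K N).toReal + (mixedVol L N).toReal := by
  obtain ⟨κ, hκ0, -, hκ⟩ := exists_volume_cone n
  rw [← ENNReal.toReal_add (hK.mixedVol_ne_top hK0 hN) (hL.mixedVol_ne_top hL0 hN),
    ← hM.mul_lintegral_surfMeasure hM0 hN hκ0 hκ, ← hK.mul_lintegral_surfMeasure hK0 hN hκ0 hκ,
    ← hL.mul_lintegral_surfMeasure hL0 hN hκ0 hκ, hS, lintegral_add_measure, mul_add]

/-- The mixed volume of a body and a homothetic copy of it. -/
lemma mixedVol_of_eq_vadd_smul (hK : IsConvexBody K) (hL : IsConvexBody L)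
    (hK0 : 0 ∈ interior K) (hL0 : 0 ∈ interior L) {t : ℝ} (ht : 0 < t) {v : Euc (n + 1)}
    (hKL : L = v +ᵥ t • K) : (mixedVol L K).toReal = t ^ n * volume.real K := by
  obtain ⟨κ, hκ0, -, hκ⟩ := exists_volume_cone n
  have ht0 : (0 : Euc (n + 1)) ∈ interior (t • K) := by
    rw [interior_smul₀ ht.ne']
    exact ⟨0, hK0, smul_zero t⟩
  have h1 : mixedVol L K = mixedVol (t • K) K := by
    rw [← hL.mul_lintegral_surfMeasure hL0 hK hκ0 hκ,
      ← (hK.smul ht).mul_lintegral_surfMeasure ht0 hK hκ0 hκ, hKL, surfMeasure_vadd]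
  rw [h1, mixedVol_smul_self n.succ_ne_zero hK hK0 ht, ENNReal.toReal_mul,
    ENNReal.toReal_ofReal (by positivity)]
  rfl

section Core
variable {a b c : ℝ}

lemma pow_add_pow_le_of_surfMeasure (hK : IsConvexBody K) (hL : IsConvexBody L)
    (hM : IsConvexBody M)
    (hK0 : 0 ∈ interior K) (hL0 : 0 ∈ interior L) (hM0 : 0 ∈ interior M)
    (hS : surfMeasure M = surfMeasure K + surfMeasure L) (ha : 0 < a) (hb : 0 < b) (hc : 0 < c)
    (hvK : volume.real K = a ^ (n + 1)) (hvL : volume.real L = b ^ (n + 1))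
    (hvM : volume.real M = c ^ (n + 1)) : a ^ n + b ^ n ≤ c ^ n := by
  have h1 := hK.mixedVol_eq_add hL hM hK0 hL0 hM0 hS hM
  have h2 : a ^ n * c ≤ (mixedVol K M).toReal :=
    hK.le_mixedVol n.succ_ne_zero hK0 hM (zero_mem hM0) ha hc hvK hvM
  have h3 : b ^ n * c ≤ (mixedVol L M).toReal :=
    hL.le_mixedVol n.succ_ne_zero hL0 hM (zero_mem hM0) hb hc hvL hvM
  rw [mixedVol_self n.succ_ne_zero hM hM0, ← Measure.real, hvM, pow_succ] at h1
  refine le_of_mul_le_mul_right ?_ hc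
  linarith

lemma exists_homothety_of_pow_le (hK : IsConvexBody K) (hL : IsConvexBody L)
    (hM : IsConvexBody M)
    (hK0 : 0 ∈ interior K) (hL0 : 0 ∈ interior L) (hM0 : 0 ∈ interior M)
    (hS : surfMeasure M = surfMeasure K + surfMeasure L) (ha : 0 < a) (hb : 0 < b) (hc : 0 < c)
    (hvK : volume.real K = a ^ (n + 1)) (hvL : volume.real L = b ^ (n + 1))
    (hvM : volume.real M = c ^ (n + 1)) (hle : c ^ n ≤ a ^ n + b ^ n) :
    ∃ (t : ℝ) (v : Euc (n + 1)), 0 < t ∧ L = v +ᵥ t • K := by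
  have h1 := hK.mixedVol_eq_add hL hM hK0 hL0 hM0 hS hM
  have h2 : a ^ n * c ≤ (mixedVol K M).toReal :=
    hK.le_mixedVol n.succ_ne_zero hK0 hM (zero_mem hM0) ha hc hvK hvM
  have h3 : b ^ n * c ≤ (mixedVol L M).toReal :=
    hL.le_mixedVol n.succ_ne_zero hL0 hM (zero_mem hM0) hb hc hvL hvM
  rw [mixedVol_self n.succ_ne_zero hM hM0, ← Measure.real, hvM, pow_succ] at h1
  have h4 : c ^ n * c ≤ a ^ n * c + b ^ n * c := by
    rw [← add_mul]
    exact mul_le_mul_of_nonneg_right hle hc.le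
  obtain ⟨s, v, hs, hMK⟩ := hK.exists_eq_vadd_smul_of_mixedVol_eq n.succ_ne_zero hK0 hM
    (zero_mem hM0) ha hc hvK hvM (by rw [Nat.succ_sub_one]; linarith)
  obtain ⟨t, w, ht, hML⟩ := hL.exists_eq_vadd_smul_of_mixedVol_eq n.succ_ne_zero hL0 hM
    (zero_mem hM0) hb hc hvL hvM (by rw [Nat.succ_sub_one]; linarith)
  refine ⟨t⁻¹ * s, t⁻¹ • (-w + v), by positivity, ?_⟩
  have h5 : t • L = (-w + v) +ᵥ s • K := by
    rw [← vadd_vadd, ← hMK, hML, neg_vadd_vadd]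
  rw [← smul_smul, ← smul_vadd_set_eq, ← h5, inv_smul_smul₀ ht.ne']

lemma pow_le_pow_add_pow_of_homothety (hK : IsConvexBody K) (hL : IsConvexBody L)
    (hM : IsConvexBody M)
    (hK0 : 0 ∈ interior K) (hL0 : 0 ∈ interior L) (hM0 : 0 ∈ interior M)
    (hS : surfMeasure M = surfMeasure K + surfMeasure L) (ha : 0 < a) (hb : 0 < b) (hc : 0 < c)
    (hvK : volume.real K = a ^ (n + 1)) (hvL : volume.real L = b ^ (n + 1))
    (hvM : volume.real M = c ^ (n + 1)) {t : ℝ} (ht : 0 < t) {v : Euc (n + 1)}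
    (hKL : L = v +ᵥ t • K) : c ^ n ≤ a ^ n + b ^ n := by
  have hbt : b = t * a := by
    have h1 : volume.real L = t ^ (n + 1) * volume.real K := by
      rw [hKL, Measure.real, measure_vadd, Measure.addHaar_smul, finrank_euclideanSpace,
        Fintype.card_fin, abs_of_pos (by positivity), ENNReal.toReal_mul,
        ENNReal.toReal_ofReal (by positivity), Measure.real]
    rw [hvL, hvK, ← mul_pow] at h1
    exact (pow_left_inj₀ hb.le (by positivity) n.succ_ne_zero).1 h1
  have h1 := hK.mixedVol_eq_add hL hM hK0 hL0 hM0 hS hK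
  have h2 : c ^ n * a ≤ (mixedVol M K).toReal :=
    hM.le_mixedVol n.succ_ne_zero hM0 hK (zero_mem hK0) hc ha hvM hvK
  rw [hK.mixedVol_of_eq_vadd_smul hL hK0 hL0 ht hKL, mixedVol_self n.succ_ne_zero hK hK0,
    ← Measure.real, hvK, pow_succ] at h1
  refine le_of_mul_le_mul_right (h2.trans (h1.le.trans_eq ?_)) ha
  rw [hbt, mul_pow]
  ring

end Core

lemma exists_pow_eq_volume {n : ℕ} {K : Set (Euc (n + 1))} (hK : IsConvexBody K) :
    ∃ a : ℝ, 0 < a ∧ volume.real K = a ^ (n + 1) ∧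
      (volume K).toReal ^ ((((n + 1 : ℕ) : ℝ) - 1) / (n + 1 : ℕ)) = a ^ n := by
  have hpos := hK.volume_pos
  have h1 : (volume.real K ^ (((n + 1 : ℕ) : ℝ)⁻¹)) ^ (n + 1) = volume.real K :=
    Real.rpow_inv_natCast_pow hpos.le n.succ_ne_zero
  refine ⟨volume.real K ^ (((n + 1 : ℕ) : ℝ)⁻¹), Real.rpow_pos_of_pos hpos _, h1.symm, ?_⟩
  rw [← Real.rpow_natCast, ← Real.rpow_mul hpos.le, Measure.real]
  congr 1
  push_cast
  ring

end IsConvexBody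

lemma exists_homothety_vadd_iff {m : ℕ} (K L : Set (Euc m)) (p q : Euc m) :
    (∃ (c : ℝ) (v : Euc m), 0 < c ∧ q +ᵥ L = v +ᵥ c • (p +ᵥ K)) ↔
      ∃ (c : ℝ) (v : Euc m), 0 < c ∧ L = v +ᵥ c • K := by
  constructor
  · rintro ⟨c, v, hc, h⟩
    refine ⟨c, -q + (v + c • p), hc, ?_⟩
    rw [← vadd_vadd, ← vadd_vadd, ← smul_vadd_set_eq, ← h, neg_vadd_vadd]
  · rintro ⟨c, v, hc, h⟩
    refine ⟨c, q + (v + -(c • p)), hc, ?_⟩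
    rw [smul_vadd_set_eq, h, vadd_vadd, vadd_vadd]
    congr 1
    abel

/-- the Kneser–Süss inequality for the Blaschke sum, with equality
iff the bodies are homothetic. -/
theorem kneser_suss {m : ℕ} (hm : 2 ≤ m) (K L M : Set (Euc m))
    (hK : IsConvexBody K) (hL : IsConvexBody L) (hM : IsConvexBody M)
    (hS : ∀ U : Set (Euc m), MeasurableSet U →
      surfMeasure M U = surfMeasure K U + surfMeasure L U) :
    (volume M).toReal ^ (((m:ℝ) - 1) / m) ≥
      (volume K).toReal ^ (((m:ℝ) - 1) / m) + (volume L).toReal ^ (((m:ℝ) - 1) / m) ∧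
    ((volume M).toReal ^ (((m:ℝ) - 1) / m) =
      (volume K).toReal ^ (((m:ℝ) - 1) / m) + (volume L).toReal ^ (((m:ℝ) - 1) / m) ↔
      ∃ (c : ℝ) (v : Euc m), 0 < c ∧ L = v +ᵥ c • K) := by
  obtain ⟨n, rfl⟩ : ∃ n, m = n + 1 := ⟨m - 1, by omega⟩
  obtain ⟨p, hp⟩ := hK.exists_zero_mem_interior_vadd
  obtain ⟨q, hq⟩ := hL.exists_zero_mem_interior_vadd
  obtain ⟨r, hr⟩ := hM.exists_zero_mem_interior_vadd
  obtain ⟨a, ha, hvK, haK⟩ := (hK.vadd p).exists_pow_eq_volume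
  obtain ⟨b, hb, hvL, hbL⟩ := (hL.vadd q).exists_pow_eq_volume
  obtain ⟨c, hc, hvM, hcM⟩ := (hM.vadd r).exists_pow_eq_volume
  have hS' : surfMeasure (r +ᵥ M) = surfMeasure (p +ᵥ K) + surfMeasure (q +ᵥ L) := by
    rw [surfMeasure_vadd, surfMeasure_vadd, surfMeasure_vadd]
    exact Measure.ext fun U hU => by rw [hS U hU, Measure.add_apply]
  have hle := (hK.vadd p).pow_add_pow_le_of_surfMeasure (hL.vadd q) (hM.vadd r) hp hq hr hS'
    ha hb hc hvK hvL hvM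
  rw [measure_vadd] at haK hbL hcM
  rw [haK, hbL, hcM]
  refine ⟨hle, ?_⟩
  rw [← exists_homothety_vadd_iff K L p q]
  constructor
  · intro h
    exact (hK.vadd p).exists_homothety_of_pow_le (hL.vadd q) (hM.vadd r) hp hq hr hS' ha hb hc
      hvK hvL hvM h.le
  · rintro ⟨t, v, ht, hKL⟩
    exact le_antisymm ((hK.vadd p).pow_le_pow_add_pow_of_homothety (hL.vadd q) (hM.vadd r)
      hp hq hr hS' ha hb hc hvK hvL hvM ht hKL) hle
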